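/- arXiv:2501.08412 — 7 statements merged into one kernel-verified Lean document; each statement's English description precedes it below -/
import Mathlib

section
/- (Solution of the ∂̄-problem; Lemma 2.1(b).) Let g : ℂ → ℂ be smooth with compact support. Then its Cauchy transform Tg is smooth on ℂ and satisfies ∂̄(Tg)(λ) = g(λ) for every λ ∈ ℂ. -/
open MeasureTheory

/-- The Wirtinger derivative `∂̄f(z) = (1/2)·(∂ₓf(z) + i·∂_yf(z))`. -/
noncomputable def dbar (f : ℂ → ℂ) (z : ℂ) : ℂ :=
  (1 / 2) * (fderiv ℝ f z 1 + Complex.I * fderiv ℝ f z Complex.I)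

/-- The Cauchy transform `(Tg)(z) = (1/π) ∫_ℂ g(μ)/(z - μ) dA(μ)` (the integrand is `0`
at `μ = z` by the division-by-zero convention). -/
noncomputable def cauchyT (g : ℂ → ℂ) (z : ℂ) : ℂ :=
  (1 / (Real.pi : ℂ)) * ∫ μ : ℂ, g μ / (z - μ)

/-- Lemma 2.1(b): for smooth compactly supported `g`, the Cauchy transform `Tg` is smooth
and solves the `∂̄`-problem `∂̄(Tg) = g` on all of `ℂ`. -/
lemma cT_locInt : LocallyIntegrable (fun w : ℂ => w⁻¹) volume := by
  refine locallyIntegrable_of_norm_le_rpow (C := 1) (α := 1) (by simp) (by simp) ?_ ?_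
  · refine Filter.Eventually.of_forall fun x => ?_
    rw [Real.rpow_neg_one]; simp
  · exact (measurable_inv).aestronglyMeasurable

lemma cT_eq (g : ℂ → ℂ) (z : ℂ) : cauchyT g z = (1 / (Real.pi : ℂ)) *
    (convolution (fun w : ℂ => w⁻¹) g (ContinuousLinearMap.mul ℝ ℂ) volume) z := by
  rw [convolution_eq_swap, cauchyT]
  congr 2
  ext μ
  rw [ContinuousLinearMap.mul_apply', div_eq_mul_inv, mul_comm]

noncomputable def cT_e (t : ℝ) : ℂ := (Real.cos t : ℂ) + (Real.sin t : ℂ) * Complex.I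

lemma cT_e_eq (t : ℝ) : cT_e t = Complex.exp (t * Complex.I) := by
  rw [Complex.exp_mul_I]; simp [cT_e]

lemma cT_e_norm (t : ℝ) : ‖cT_e t‖ = 1 := by
  rw [cT_e_eq]; exact Complex.norm_exp_ofReal_mul_I t

lemma cT_e_cont : Continuous cT_e := by
  unfold cT_e; fun_prop

lemma cT_e_deriv (t : ℝ) : HasDerivAt cT_e (Complex.I * cT_e t) t := by
  have : cT_e = fun t : ℝ => Complex.exp (t * Complex.I) := funext cT_e_eq
  rw [this]
  have h := ((Complex.ofRealCLM.hasDerivAt (x := t)).mul_const Complex.I).cexp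
  simpa [mul_comm] using h

lemma cT_supp (g : ℂ → ℂ) (hgs : HasCompactSupport g) (z : ℂ) :
    ∃ R : ℝ, 0 < R ∧ ∀ r t : ℝ, R < r → g (z - r * cT_e t) = 0 ∧
      fderiv ℝ g (z - r * cT_e t) = 0 := by
  obtain ⟨C, hC0, hC⟩ := hgs.isCompact.isBounded.exists_pos_norm_le
  refine ⟨C + ‖z‖, by positivity, fun r t hr => ?_⟩
  have hn : z - r * cT_e t ∉ tsupport g := by
    intro h
    have h1 := hC _ h
    have h2 : ‖(r : ℂ) * cT_e t‖ = r := by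
      rw [norm_mul, cT_e_norm, mul_one, Complex.norm_real, Real.norm_of_nonneg]
      have := norm_nonneg z
      linarith
    have h3 := norm_sub_norm_le ((r : ℂ) * cT_e t) z
    rw [norm_sub_rev] at h3
    linarith
  refine ⟨image_eq_zero_of_notMem_tsupport hn, ?_⟩
  exact image_eq_zero_of_notMem_tsupport fun h => hn (tsupport_fderiv_subset ℝ h)

lemma cT_key (g : ℂ → ℂ) (hg : ContDiff ℝ (⊤ : ℕ∞) g)
    (hgs : HasCompactSupport g) (z : ℂ) :
    ∫ t : ℂ, t⁻¹ * dbar g (z - t) = Real.pi * g z := by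
  obtain ⟨R, hR, hsupp⟩ := cT_supp g hgs z
  have hd : Differentiable ℝ g := hg.differentiable (by simp)
  have hc : Continuous (fderiv ℝ g) := hg.continuous_fderiv (by simp)
  set A : ℝ × ℝ → ℂ := fun p => fderiv ℝ g (z - p.1 * cT_e p.2) (cT_e p.2) with hA
  set B : ℝ × ℝ → ℂ := fun p => fderiv ℝ g (z - p.1 * cT_e p.2) (Complex.I * cT_e p.2) with hB
  have hec := cT_e_cont
  have hAc : Continuous A := by
    refine (hc.comp ?_).clm_apply ?_ <;> fun_prop
  have hBc : Continuous B := by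
    refine (hc.comp ?_).clm_apply ?_ <;> fun_prop
  have hint : ∀ F : ℝ × ℝ → ℂ, Continuous F → (∀ r t, R < r → F (r, t) = 0) →
      IntegrableOn F (Set.Ioi (0 : ℝ) ×ˢ Set.Ioo (-Real.pi) Real.pi) (volume.prod volume) := by
    intro F hF h0
    have h1 : IntegrableOn F (Set.Icc (0 : ℝ) R ×ˢ Set.Icc (-Real.pi) Real.pi)
        (volume.prod volume) :=
      hF.continuousOn.integrableOn_compact (isCompact_Icc.prod isCompact_Icc)
    refine h1.of_forall_sdiff_eq_zero (measurableSet_Ioi.prod measurableSet_Ioo) ?_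
    rintro ⟨r, t⟩ ⟨⟨hr, ht⟩, hn⟩
    apply h0
    by_contra hcon
    push Not at hcon
    exact hn ⟨⟨le_of_lt hr, hcon⟩, ⟨ht.1.le, ht.2.le⟩⟩
  have hAi := hint A hAc fun r t h => by simp [hA, (hsupp r t h).2]
  have hBi := hint B hBc fun r t h => by simp [hB, (hsupp r t h).2]
  have hlin : ∀ r t : ℝ, HasDerivAt (fun r : ℝ => g (z - r * cT_e t)) (- A (r, t)) r := by
    intro r t
    have h1 : HasDerivAt (fun r : ℝ => z - (r : ℂ) * cT_e t) (-(cT_e t)) r := by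
      simpa using ((Complex.ofRealCLM.hasDerivAt (x := r)).mul_const (cT_e t)).const_sub z
    have h2 := (hd (z - r * cT_e t)).hasFDerivAt.comp_hasDerivAt r h1
    rw [map_neg] at h2
    exact h2
  have hang : ∀ r t : ℝ, HasDerivAt (fun t : ℝ => g (z - r * cT_e t)) (- ((r : ℂ) * B (r, t))) t := by
    intro r t
    have h1 : HasDerivAt (fun t : ℝ => z - (r : ℂ) * cT_e t) (-(r * (Complex.I * cT_e t))) t := by
      simpa using ((cT_e_deriv t).const_mul (r : ℂ)).const_sub z
    have h2 := (hd (z - r * cT_e t)).hasFDerivAt.comp_hasDerivAt t h1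
    have h3 : (r : ℂ) * (Complex.I * cT_e t) = r • (Complex.I * cT_e t) := by
      simp
    rw [map_neg, h3, map_smul, Complex.real_smul] at h2
    exact h2
  have IA : ∫ p in Set.Ioi (0 : ℝ) ×ˢ Set.Ioo (-Real.pi) Real.pi, A p ∂(volume.prod volume)
      = 2 * Real.pi * g z := by
    rw [← setIntegral_prod_swap, setIntegral_prod _ ?_]
    · have : ∀ t : ℝ, ∫ r in Set.Ioi (0 : ℝ), A (r, t) = g z := by
        intro t
        have hi : IntegrableOn (fun r => A (r, t)) (Set.Ioi 0) := by
          have h1 : IntegrableOn (fun r => A (r, t)) (Set.Icc 0 R) :=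
            Continuous.integrableOn_Icc (by fun_prop)
          refine h1.of_forall_sdiff_eq_zero measurableSet_Ioi ?_
          rintro r ⟨hr, hn⟩
          have : R < r := by
            by_contra hcon
            push Not at hcon
            exact hn ⟨le_of_lt hr, hcon⟩
          simp [hA, (hsupp r t this).2]
        have := integral_Ioi_of_hasDerivAt_of_tendsto' (a := 0)
          (f := fun r : ℝ => - g (z - r * cT_e t)) (f' := fun r => A (r, t)) (m := 0)
          (fun r _ => by have h := (hlin r t).neg; rw [neg_neg] at h; exact h) hi ?_
        · rw [this]; simp
        · refine tendsto_const_nhds.congr' ?_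
          filter_upwards [Filter.eventually_gt_atTop R] with r hr
          simp [(hsupp r t hr).1]
      simp only [Prod.swap_prod_mk, this]
      rw [setIntegral_const]
      simp [Measure.real, ← two_mul, Real.pi_pos.le]
    · have := hAi
      rw [IntegrableOn, ← Measure.prod_restrict] at this ⊢
      exact this.swap
  have IB : ∫ p in Set.Ioi (0 : ℝ) ×ˢ Set.Ioo (-Real.pi) Real.pi, B p ∂(volume.prod volume)
      = 0 := by
    rw [setIntegral_prod _ hBi]
    rw [setIntegral_congr_fun (g := fun _ => (0 : ℂ)) measurableSet_Ioi]
    · simp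
    intro r hr
    have hr' : (r : ℂ) ≠ 0 := by exact_mod_cast (ne_of_gt hr)
    have h := intervalIntegral.integral_eq_sub_of_hasDerivAt (a := -Real.pi) (b := Real.pi)
      (fun t _ => hang r t) (Continuous.intervalIntegrable (by fun_prop) _ _)
    have he : cT_e Real.pi = cT_e (-Real.pi) := by simp [cT_e]
    rw [he, sub_self, intervalIntegral.integral_neg, intervalIntegral.integral_const_mul, neg_eq_zero,
      mul_eq_zero, or_iff_right hr', intervalIntegral.integral_of_le (by linarith [Real.pi_pos]),
      integral_Ioc_eq_integral_Ioo] at h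
    exact h
  rw [← Complex.integral_comp_polarCoord_symm]
  have hcongr : ∀ p ∈ polarCoord.target,
      p.1 • ((Complex.polarCoord.symm p)⁻¹ * dbar g (z - Complex.polarCoord.symm p))
      = (1 / 2) * (A p + Complex.I * B p) := by
    rintro ⟨r, t⟩ ⟨hr, ht⟩
    have hr' : (r : ℂ) ≠ 0 := by exact_mod_cast (ne_of_gt hr)
    have hs : Complex.polarCoord.symm (r, t) = r * cT_e t := by
      rw [Complex.polarCoord_symm_apply]; rfl
    have hlin2 : ∀ (L : ℂ →L[ℝ] ℂ) (w : ℂ), L w = w.re * L 1 + w.im * L Complex.I := by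
      intro L w
      have hw : w = w.re • (1 : ℂ) + w.im • Complex.I := by
        simp [Complex.re_add_im]
      calc L w = L (w.re • (1 : ℂ) + w.im • Complex.I) := by rw [← hw]
        _ = _ := by rw [map_add, map_smul, map_smul, Complex.real_smul, Complex.real_smul]
    rw [hs]
    simp only [hA, hB, dbar]
    generalize fderiv ℝ g (z - r * cT_e t) = L
    rw [hlin2 L (cT_e t), hlin2 L (Complex.I * cT_e t)]
    have hinv : (cT_e t)⁻¹ = Real.cos t - Real.sin t * Complex.I := by
      rw [cT_e_eq, ← Complex.exp_neg, ← neg_mul, Complex.exp_mul_I]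
      simp [sub_eq_add_neg]
    have hre : (cT_e t).re = Real.cos t := by
      rw [cT_e, ← Complex.mk_eq_add_mul_I]
    have him : (cT_e t).im = Real.sin t := by
      rw [cT_e, ← Complex.mk_eq_add_mul_I]
    rw [mul_inv, hinv]
    simp only [Complex.I_mul_re, Complex.I_mul_im, hre, him, Complex.real_smul]
    field_simp
    push_cast
    ring_nf
    simp only [Complex.I_sq]
    ring
  rw [setIntegral_congr_fun polarCoord.open_target.measurableSet hcongr]
  change ∫ p in Set.Ioi (0 : ℝ) ×ˢ Set.Ioo (-Real.pi) Real.pi, _ ∂(volume.prod volume) = _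
  rw [integral_const_mul, integral_add hAi (hBi.const_mul _), integral_const_mul, IA, IB]
  ring

theorem cauchyT_solves_dbar_problem (g : ℂ → ℂ) (hg : ContDiff ℝ (⊤ : ℕ∞) g)
    (hgs : HasCompactSupport g) :
    ContDiff ℝ (⊤ : ℕ∞) (cauchyT g) ∧ ∀ z : ℂ, dbar (cauchyT g) z = g z := by
  have hT : cauchyT g = fun z => (1 / (Real.pi : ℂ)) *
      (convolution (fun w : ℂ => w⁻¹) g (ContinuousLinearMap.mul ℝ ℂ) volume) z :=
    funext (cT_eq g)
  refine ⟨?_, fun z => ?_⟩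
  · rw [hT]
    exact contDiff_const.mul (hgs.contDiff_convolution_right _ cT_locInt hg)
  have hg1 : ContDiff ℝ 1 g := hg.of_le (by exact_mod_cast le_top)
  have hc : Continuous (fderiv ℝ g) := hg.continuous_fderiv (by simp)
  have h1 := hgs.hasFDerivAt_convolution_right (ContinuousLinearMap.mul ℝ ℂ) cT_locInt hg1 z
  have h2 := h1.const_mul (1 / (Real.pi : ℂ))
  have h3 : ∀ v : ℂ, fderiv ℝ (cauchyT g) z v =
      (1 / (Real.pi : ℂ)) * ∫ t : ℂ, t⁻¹ * fderiv ℝ g (z - t) v := by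
    intro v
    rw [hT, h2.fderiv, smul_apply, convolution_precompR_apply _ cT_locInt
      (hgs.fderiv ℝ) hc, convolution_def, smul_eq_mul]
    rfl
  have hI : ∀ v : ℂ, Integrable (fun t : ℂ => t⁻¹ * fderiv ℝ g (z - t) v) := by
    intro v
    exact (hgs.fderiv_apply ℝ v).convolutionExists_right
      (ContinuousLinearMap.mul ℝ ℂ) cT_locInt (hc.clm_apply continuous_const) z
  have hk := cT_key g hg hgs z
  have hsplit : ∫ t : ℂ, t⁻¹ * dbar g (z - t) = (1 / 2) * ((∫ t : ℂ, t⁻¹ * fderiv ℝ g (z - t) 1)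
      + Complex.I * ∫ t : ℂ, t⁻¹ * fderiv ℝ g (z - t) Complex.I) := by
    rw [← integral_const_mul, ← integral_add (hI 1) ((hI _).const_mul _), ← integral_const_mul]
    congr 1
    ext t
    simp only [dbar]
    ring
  have hpi : (Real.pi : ℂ) ≠ 0 := by exact_mod_cast Real.pi_ne_zero
  have : dbar (cauchyT g) z = (1 / (Real.pi : ℂ)) * ∫ t : ℂ, t⁻¹ * dbar g (z - t) := by
    rw [hsplit, dbar, h3, h3]; ring
  rw [this, hk]
  field_simp
end

section
/- (Lemma 2.2(i), concrete form.) Let g : ℂ → ℂ be smooth with compact support. Then the Cauchy transform Tg is complex-differentiable at every point of the complement of tsupport g (hence holomorphic there), and Tg(λ) → 0 as |λ| → ∞, i.e. Tg tends to 0 along the cobounded filter on ℂ. -/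
open MeasureTheory

/-- Lemma 2.2(i): for smooth compactly supported `g`, the Cauchy transform `Tg` is
complex-differentiable at every point outside `tsupport g` (hence holomorphic there),
and `Tg(λ) → 0` as `|λ| → ∞`. -/
theorem cauchyT_holomorphic_off_support_and_decay (g : ℂ → ℂ) (hg : ContDiff ℝ (⊤ : ℕ∞) g)
    (hgs : HasCompactSupport g) :
    (∀ z ∉ tsupport g, DifferentiableAt ℂ (cauchyT g) z) ∧
      Filter.Tendsto (cauchyT g) (Bornology.cobounded ℂ) (nhds 0) := by
  have hint : Integrable g := hg.continuous.integrable_of_hasCompactSupport hgs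
  have hm : Measurable g := hg.continuous.measurable
  constructor
  · intro z hz
    obtain ⟨r, hr, hball⟩ := Metric.isOpen_iff.1 (isClosed_tsupport g).isOpen_compl z hz
    have key : ∀ a x, x ∈ Metric.ball z (r / 2) → g a ≠ 0 → r / 2 ≤ ‖x - a‖ := by
      intro a x hx ha
      by_contra! h
      have h1 : a ∈ Metric.ball z r := by
        rw [Metric.mem_ball] at hx ⊢
        rw [← dist_eq_norm] at h
        have := dist_triangle a x z
        rw [dist_comm a x] at this
        linarith
      exact hball h1 (subset_tsupport g ha)
    have hz0 : z ∈ Metric.ball z (r / 2) := Metric.mem_ball_self (by positivity)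
    have hr2 : 0 < r / 2 := by positivity
    have main := hasDerivAt_integral_of_dominated_loc_of_deriv_le (μ := (volume : Measure ℂ))
      (F := fun x a => g a / (x - a)) (F' := fun x a => - g a / (x - a) ^ 2)
      (x₀ := z) (s := Metric.ball z (r / 2)) (bound := fun a => ‖g a‖ / (r / 2) ^ 2)
      (Metric.ball_mem_nhds z hr2)
      (Filter.Eventually.of_forall fun x =>
        (hm.div (measurable_const.sub measurable_id)).aestronglyMeasurable)
      ?_ ((hm.neg.div ((measurable_const.sub measurable_id).pow_const 2)).aestronglyMeasurable)
      ?_ (hint.norm.div_const _) ?_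
    · exact (main.2.const_mul (1 / (Real.pi : ℂ))).differentiableAt
    · refine (hint.norm.div_const (r / 2)).mono'
        (hm.div (measurable_const.sub measurable_id)).aestronglyMeasurable
        (Filter.Eventually.of_forall fun a => ?_)
      by_cases ha : g a = 0
      · simp [ha]
      · have := key a z hz0 ha
        rw [norm_div]
        gcongr
    · refine Filter.Eventually.of_forall fun a x hx => ?_
      by_cases ha : g a = 0
      · simp [ha]
      · have := key a x hx ha
        rw [norm_div, norm_neg, norm_pow]
        gcongr
    · refine Filter.Eventually.of_forall fun a x hx => ?_
      by_cases ha : g a = 0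
      · simpa [ha] using hasDerivAt_const x (0 : ℂ)
      · have h1 := key a x hx ha
        have h2 : x - a ≠ 0 := norm_pos_iff.1 (hr2.trans_le h1)
        have := (hasDerivAt_const x (g a)).div ((hasDerivAt_id x).sub_const a) h2
        simp only [id, zero_mul, zero_sub, mul_one] at this
        exact this
  · obtain ⟨R, hR⟩ := hgs.isCompact.isBounded.exists_norm_le
    have : (Bornology.cobounded ℂ).IsCountablyGenerated := by
      rw [← comap_norm_atTop]
      infer_instance
    have main : Filter.Tendsto (fun z => ∫ a : ℂ, g a / (z - a)) (Bornology.cobounded ℂ)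
        (nhds (∫ _ : ℂ, (0 : ℂ))) := by
      refine tendsto_integral_filter_of_dominated_convergence (fun a => ‖g a‖)
        (Filter.Eventually.of_forall fun x =>
          (hm.div (measurable_const.sub measurable_id)).aestronglyMeasurable)
        ?_ hint.norm (Filter.Eventually.of_forall fun a => ?_)
      · filter_upwards [tendsto_norm_cobounded_atTop.eventually_ge_atTop (R + 1)] with z hz
        refine Filter.Eventually.of_forall fun a => ?_
        by_cases ha : g a = 0
        · simp [ha]
        · have h1 := hR a (subset_tsupport g ha)
          have h2 := norm_sub_norm_le z a
          rw [norm_div]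
          exact div_le_self (norm_nonneg _) (by linarith)
      · have h1 : Filter.Tendsto (fun z : ℂ => z - a) (Bornology.cobounded ℂ)
            (Bornology.cobounded ℂ) := by
          rw [← tendsto_norm_atTop_iff_cobounded]
          refine Filter.tendsto_atTop_mono (fun z => norm_sub_norm_le z a) ?_
          exact Filter.tendsto_atTop_add_const_right _ (-‖a‖) tendsto_norm_cobounded_atTop
        have h2 := (Filter.tendsto_inv₀_cobounded.comp h1).const_mul (g a)
        simpa [div_eq_mul_inv] using h2
    have := main.const_mul (1 / (Real.pi : ℂ))
    simp only [integral_zero, mul_zero] at this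
    exact this
end

section
/- (Cauchy transform inverts ∂̄ on compactly supported functions; 'if' direction of Lemma 2.2(ii).) Let h : ℂ → ℂ be smooth with compact support. Then T(∂̄h) = h, i.e. for every λ ∈ ℂ, (1/π) ∫_ℂ (∂̄h)(μ)/(λ − μ) dA(μ) = h(λ). -/
open MeasureTheory

theorem aux_hasDerivAt_r (h : ℂ → ℂ) (hd : Differentiable ℝ h) (z e : ℂ) (r : ℝ) :
    HasDerivAt (fun r : ℝ => h (z + (r : ℂ) * e)) (fderiv ℝ h (z + (r : ℂ) * e) e) r := by
  have h1 : HasDerivAt (fun r : ℝ => z + (r : ℂ) * e) e r := by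
    have := ((Complex.ofRealCLM.hasDerivAt (x := r)).mul_const e).const_add z
    simpa using this
  exact (hd _).hasFDerivAt.comp_hasDerivAt r h1

theorem aux_hasDerivAt_t (h : ℂ → ℂ) (hd : Differentiable ℝ h) (z : ℂ) (r t : ℝ) :
    HasDerivAt (fun t : ℝ => h (z + (r : ℂ) * Complex.exp (t * Complex.I)))
      (r • fderiv ℝ h (z + (r : ℂ) * Complex.exp (t * Complex.I))
        (Complex.I * Complex.exp (t * Complex.I))) t := by
  have h1 : HasDerivAt (fun t : ℝ => z + (r : ℂ) * Complex.exp (t * Complex.I))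
      (r • (Complex.I * Complex.exp (t * Complex.I))) t := by
    have h0 : HasDerivAt (fun t : ℝ => (t : ℂ) * Complex.I) Complex.I t := by
      simpa using (Complex.ofRealCLM.hasDerivAt (x := t)).mul_const Complex.I
    have := (h0.cexp.const_mul (r : ℂ)).const_add z
    have e : r • (Complex.I * Complex.exp (t * Complex.I))
        = (r : ℂ) * (Complex.exp (t * Complex.I) * Complex.I) := by
      rw [Complex.real_smul]; ring
    rw [e]
    exact this
  have := (hd _).hasFDerivAt.comp_hasDerivAt t h1
  rwa [map_smul] at this

theorem aux_integrable (G : ℝ × ℝ → ℂ) (hG : Continuous G) (R : ℝ)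
    (hR : ∀ p : ℝ × ℝ, R < p.1 → G p = 0) :
    IntegrableOn G (Set.Ioi (0 : ℝ) ×ˢ Set.Ioo (-Real.pi) Real.pi) (volume.prod volume) := by
  have h1 : IntegrableOn G (Set.Icc (0 : ℝ) R ×ˢ Set.Icc (-Real.pi) Real.pi)
      (volume.prod volume) :=
    hG.continuousOn.integrableOn_compact (isCompact_Icc.prod isCompact_Icc)
  refine h1.of_forall_sdiff_eq_zero (measurableSet_Ioi.prod measurableSet_Ioo) ?_
  rintro ⟨r, t⟩ ⟨⟨hr, ht⟩, hn⟩
  apply hR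
  by_contra hc
  exact hn ⟨⟨le_of_lt hr, not_lt.mp hc⟩, Set.Ioo_subset_Icc_self ht⟩

theorem aux_dbar (h : ℂ → ℂ) (w : ℂ) (t : ℝ) :
    dbar h w = (1 / 2) * Complex.exp (t * Complex.I) *
      (fderiv ℝ h w (Complex.exp (t * Complex.I)) +
        Complex.I * fderiv ℝ h w (Complex.I * Complex.exp (t * Complex.I))) := by
  have hlin : ∀ a b : ℝ, fderiv ℝ h w ((a : ℂ) + b * Complex.I)
      = a * fderiv ℝ h w 1 + b * fderiv ℝ h w Complex.I := by
    intro a b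
    have : (a : ℂ) + b * Complex.I = a • (1 : ℂ) + b • Complex.I := by simp
    rw [this, map_add, map_smul, map_smul]; simp
  have e1 : Complex.exp (t * Complex.I)
      = (Real.cos t : ℂ) + (Real.sin t : ℝ) * Complex.I := by
    rw [Complex.exp_mul_I]; simp
  have e2 : Complex.I * Complex.exp (t * Complex.I)
      = ((-Real.sin t : ℝ) : ℂ) + (Real.cos t : ℝ) * Complex.I := by
    rw [e1]; push_cast; linear_combination (Complex.sin t) * Complex.I_sq
  rw [e2, e1, hlin, hlin, dbar]
  have hs : (Real.sin t : ℂ) ^ 2 + (Real.cos t : ℂ) ^ 2 = 1 := by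
    exact_mod_cast Real.sin_sq_add_cos_sq t
  push_cast at hs ⊢
  generalize fderiv ℝ h w 1 = A
  generalize fderiv ℝ h w Complex.I = B
  generalize Complex.sin (t : ℂ) = s at *
  generalize Complex.cos (t : ℂ) = c at *
  have hI := Complex.I_sq
  generalize Complex.I = i at *
  linear_combination (-(1/2) * (A + i * B)) * hs + (1/2) * (s ^ 2 * A - s * c * B) * hI

theorem cauchyT_dbar_eq_self (h : ℂ → ℂ) (hh : ContDiff ℝ (⊤ : ℕ∞) h)
    (hhs : HasCompactSupport h) :
    ∀ z : ℂ, cauchyT (dbar h) z = h z := by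
  intro z
  have hd : Differentiable ℝ h := hh.differentiable (by simp)
  have hc : Continuous (fderiv ℝ h) := hh.continuous_fderiv (by simp)
  -- radius of the support
  obtain ⟨R, hRpos, hR⟩ : ∃ R : ℝ, 0 < R ∧ ∀ (r t : ℝ), R < r →
      z + (r : ℂ) * Complex.exp (t * Complex.I) ∉ tsupport h := by
    obtain ⟨R, hRpos, hR⟩ := hhs.isCompact.isBounded.subset_closedBall_lt 0 z
    refine ⟨R, hRpos, fun r t hr hm => ?_⟩
    have := hR hm
    rw [Metric.mem_closedBall, dist_eq_norm] at this
    simp [Complex.norm_exp_ofReal_mul_I] at this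
    rw [abs_of_pos (hRpos.trans hr)] at this
    linarith
  have hR0 : ∀ (r t : ℝ), R < r → h (z + (r : ℂ) * Complex.exp (t * Complex.I)) = 0 :=
    fun r t hr => image_eq_zero_of_notMem_tsupport (hR r t hr)
  have hR1 : ∀ (r t : ℝ), R < r →
      fderiv ℝ h (z + (r : ℂ) * Complex.exp (t * Complex.I)) = 0 :=
    fun r t hr => image_eq_zero_of_notMem_tsupport
      (fun hm => hR r t hr (tsupport_fderiv_subset ℝ hm))
  let F1 : ℝ × ℝ → ℂ := fun p =>
    fderiv ℝ h (z + (p.1 : ℂ) * Complex.exp (p.2 * Complex.I)) (Complex.exp (p.2 * Complex.I))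
  let F2 : ℝ × ℝ → ℂ := fun p =>
    fderiv ℝ h (z + (p.1 : ℂ) * Complex.exp (p.2 * Complex.I))
      (Complex.I * Complex.exp (p.2 * Complex.I))
  have hF1 : Continuous F1 :=
    (hc.comp (by fun_prop)).clm_apply (by fun_prop)
  have hF2 : Continuous F2 :=
    (hc.comp (by fun_prop)).clm_apply (by fun_prop)
  have hI1 := aux_integrable F1 hF1 R (fun p hp => by simp [F1, hR1 _ _ hp])
  have hI2 := aux_integrable F2 hF2 R (fun p hp => by simp [F2, hR1 _ _ hp])
  have hint1 : ∫ p in Set.Ioi (0 : ℝ) ×ˢ Set.Ioo (-Real.pi) Real.pi, F1 p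
      ∂(volume.prod volume) = -(2 * Real.pi) * h z := by
    rw [← setIntegral_prod_swap, setIntegral_prod (fun p : ℝ × ℝ => F1 p.swap) hI1.swap]
    have : ∀ t : ℝ, ∫ r in Set.Ioi (0 : ℝ), F1 (Prod.swap (t, r)) = - h z := by
      intro t
      have := integral_Ioi_of_hasDerivAt_of_tendsto' (a := (0 : ℝ)) (m := (0 : ℂ))
        (fun r _ => aux_hasDerivAt_r h hd z (Complex.exp (t * Complex.I)) r) ?_ ?_
      · simpa using this
      · have hcont : Continuous (fun r : ℝ => F1 (r, t)) := by fun_prop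
        have h1 : IntegrableOn (fun r : ℝ => F1 (r, t)) (Set.Icc 0 R) :=
          hcont.continuousOn.integrableOn_compact isCompact_Icc
        refine h1.of_forall_sdiff_eq_zero measurableSet_Ioi ?_
        rintro r ⟨hr, hn⟩
        have : R < r := by
          by_contra hc
          exact hn ⟨le_of_lt hr, not_lt.mp hc⟩
        simp [F1, hR1 _ _ this]
      · apply tendsto_const_nhds.congr'
        filter_upwards [Filter.eventually_gt_atTop R] with r hr
        exact (hR0 r t hr).symm
    simp only [this]
    rw [setIntegral_const]
    simp [Real.pi_pos.le]
    left
    ring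
  have hint2 : ∫ p in Set.Ioi (0 : ℝ) ×ˢ Set.Ioo (-Real.pi) Real.pi, F2 p
      ∂(volume.prod volume) = 0 := by
    rw [setIntegral_prod _ hI2]
    apply setIntegral_eq_zero_of_forall_eq_zero
    intro r hr
    have hr : 0 < r := hr
    have hcont : Continuous (fun t : ℝ => F2 (r, t)) := by fun_prop
    rw [← integral_Ioc_eq_integral_Ioo, ← intervalIntegral.integral_of_le (by linarith [Real.pi_pos])]
    have := intervalIntegral.integral_eq_sub_of_hasDerivAt (a := -Real.pi) (b := Real.pi)
      (fun t _ => aux_hasDerivAt_t h hd z r t)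
      ((hcont.const_smul r).intervalIntegrable _ _)
    rw [intervalIntegral.integral_smul] at this
    have h0 : r • (∫ t in (-Real.pi)..Real.pi, F2 (r, t)) = 0 := by
      rw [this]
      simp [Complex.exp_neg]
    exact (smul_eq_zero.mp h0).resolve_left hr.ne'
  have key : ∫ μ : ℂ, dbar h μ / (z - μ) = Real.pi * h z := by
    rw [← integral_add_left_eq_self (fun μ : ℂ => dbar h μ / (z - μ)) z,
      ← Complex.integral_comp_polarCoord_symm]
    have : ∫ p in polarCoord.target, p.1 • (fun w : ℂ => dbar h (z + w) / (z - (z + w)))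
          (Complex.polarCoord.symm p)
        = ∫ p in Set.Ioi (0 : ℝ) ×ˢ Set.Ioo (-Real.pi) Real.pi,
          (-(1/2 : ℂ) * F1 p + (-(1/2 : ℂ) * Complex.I) * F2 p) ∂(volume.prod volume) := by
      rw [polarCoord_target]
      refine setIntegral_congr_fun (measurableSet_Ioi.prod measurableSet_Ioo) ?_
      rintro ⟨r, t⟩ ⟨hr, ht⟩
      have hr : 0 < r := hr
      have hr' : (r : ℂ) ≠ 0 := by exact_mod_cast hr.ne'
      have hp : Complex.polarCoord.symm (r, t) = (r : ℂ) * Complex.exp (t * Complex.I) := by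
        rw [Complex.polarCoord_symm_apply, Complex.exp_mul_I]; simp
      have he := Complex.exp_ne_zero (t * Complex.I)
      simp only [hp, F1, F2, Complex.real_smul]
      rw [aux_dbar h _ t]
      field_simp
      ring
    rw [this, integral_add (hI1.const_mul _) (hI2.const_mul _), integral_const_mul,
      integral_const_mul, hint1, hint2]
    ring
  rw [cauchyT, key]
  have : (Real.pi : ℂ) ≠ 0 := by exact_mod_cast Real.pi_ne_zero
  field_simp
end

section
/- (Lemma 2.3, concrete form: the form ⌈f⌉ is independent of choices up to ∂̄-exact terms.) Let W ⊆ ℂ be a bounded open set, K ⊆ W a compact set, and f : ℂ → ℂ a function that is holomorphic on ℂ \ K. Let ρ, ρ′ : ℂ → ℝ be smooth functions with compact supports contained in W, each identically 1 on some neighborhood of K. Let F (resp. F′) be the function on ℂ equal to f(z)·(∂̄ρ)(z) (resp. f(z)·(∂̄ρ′)(z)) for z ∈ ℂ \ K and equal to 0 on K; these are smooth with compact support contained in W. Then there exists a smooth h : ℂ → ℂ with tsupport h compact and contained in W such that ∂̄h = F − F′. -/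
open MeasureTheory

lemma aux_smooth (K : Set ℂ) (hK : IsCompact K) (f : ℂ → ℂ) (hf : DifferentiableOn ℂ f Kᶜ)
    (g φ : ℂ → ℂ) (hg : ContDiff ℝ (⊤ : ℕ∞) g) (V : Set ℂ) (hV : IsOpen V) (hKV : K ⊆ V)
    (hgV : ∀ z ∈ V, g z = 0) (h1 : ∀ z ∉ K, φ z = f z * g z) (h0 : ∀ z ∈ K, φ z = 0) :
    ContDiff ℝ (⊤ : ℕ∞) φ := by
  rw [contDiff_iff_contDiffAt]
  intro z
  by_cases hz : z ∈ K
  · have : φ =ᶠ[nhds z] fun _ => 0 := by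
      filter_upwards [hV.mem_nhds (hKV hz)] with w hw
      by_cases hwK : w ∈ K
      · exact h0 w hwK
      · rw [h1 w hwK, hgV w hw, mul_zero]
    exact contDiffAt_const.congr_of_eventuallyEq this
  · have hn : Kᶜ ∈ nhds z := hK.isClosed.isOpen_compl.mem_nhds hz
    have : φ =ᶠ[nhds z] fun w => f w * g w := by
      filter_upwards [hn] with w hw using h1 w hw
    have hfz : ContDiffAt ℂ (⊤ : ℕ∞) f z := (hf.analyticAt hn).contDiffAt
    exact ((hfz.restrict_scalars ℝ).mul hg.contDiffAt).congr_of_eventuallyEq this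

lemma aux_supp (K : Set ℂ) (f g φ : ℂ → ℂ) (r : Set ℂ) (hr : IsClosed r)
    (hg : ∀ z ∉ r, g z = 0)
    (h1 : ∀ z ∉ K, φ z = f z * g z) (h0 : ∀ z ∈ K, φ z = 0) : tsupport φ ⊆ r := by
  apply closure_minimal _ hr
  intro z hz
  by_contra hzr
  apply hz
  by_cases hzK : z ∈ K
  · exact h0 z hzK
  · rw [h1 z hzK, hg z hzr, mul_zero]

lemma dbar_congr {f g : ℂ → ℂ} {z : ℂ} (h : f =ᶠ[nhds z] g) : dbar f z = dbar g z := by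
  unfold dbar; rw [h.fderiv_eq]

lemma dbar_fconst (c z : ℂ) : dbar (fun _ => c) z = 0 := by
  simp [dbar]

lemma dbar_smooth {g : ℂ → ℂ} (hg : ContDiff ℝ (⊤ : ℕ∞) g) : ContDiff ℝ (⊤ : ℕ∞) (dbar g) := by
  have h : ContDiff ℝ (⊤ : ℕ∞) (fderiv ℝ g) := hg.fderiv_right (by simp)
  unfold dbar
  exact contDiff_const.mul ((h.clm_apply contDiff_const).add
    (contDiff_const.mul (h.clm_apply contDiff_const)))

lemma aux_form (W K : Set ℂ) (hK : IsCompact K)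
    (f : ℂ → ℂ) (hf : DifferentiableOn ℂ f Kᶜ) (ρ : ℂ → ℝ)
    (hρ : ContDiff ℝ (⊤ : ℕ∞) ρ) (hρs : HasCompactSupport ρ) (hρW : tsupport ρ ⊆ W)
    (hρ1 : ∃ V : Set ℂ, IsOpen V ∧ K ⊆ V ∧ ∀ z ∈ V, ρ z = 1) (F : ℂ → ℂ)
    (hF : ∀ z ∉ K, F z = f z * dbar (fun w => (ρ w : ℂ)) z)
    (hF0 : ∀ z ∈ K, F z = 0) :
    ContDiff ℝ (⊤ : ℕ∞) F ∧ IsCompact (tsupport F) ∧ tsupport F ⊆ W := by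
  obtain ⟨V, hV, hKV, hV1⟩ := hρ1
  have hc : ContDiff ℝ (⊤ : ℕ∞) (fun w => (ρ w : ℂ)) := Complex.ofRealCLM.contDiff.comp hρ
  have hs : tsupport F ⊆ tsupport ρ := by
    refine aux_supp K f _ F _ (isClosed_tsupport ρ) ?_ hF hF0
    intro z hz
    rw [← dbar_fconst 0 z]
    apply dbar_congr
    filter_upwards [(isClosed_tsupport ρ).isOpen_compl.mem_nhds hz] with w hw
    simp [image_eq_zero_of_notMem_tsupport hw]
  refine ⟨aux_smooth K hK f hf _ F (dbar_smooth hc) V hV hKV ?_ hF hF0,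
    hρs.isCompact.of_isClosed_subset (isClosed_tsupport F) hs, hs.trans hρW⟩
  intro z hz
  rw [← dbar_fconst 1 z]
  apply dbar_congr
  filter_upwards [hV.mem_nhds hz] with w hw
  simp [hV1 w hw]

/-- Lemma 2.3 (concrete form): the compactly supported form `⌈f⌉ = f·∂̄ρ` is independent of
the choice of bump function `ρ`, up to a `∂̄`-exact term supported in `W`.  The functions
`F = f·∂̄ρ` and `F′ = f·∂̄ρ′` (extended by `0` on `K`) are smooth with compact support in `W`,
and their difference is `∂̄h` for a smooth `h` with compact support contained in `W`. -/
theorem bump_form_independence (W K : Set ℂ) (hW : IsOpen W) (hWb : Bornology.IsBounded W)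
    (hK : IsCompact K) (hKW : K ⊆ W)
    (f : ℂ → ℂ) (hf : DifferentiableOn ℂ f Kᶜ)
    (ρ ρ' : ℂ → ℝ)
    (hρ : ContDiff ℝ (⊤ : ℕ∞) ρ) (hρ' : ContDiff ℝ (⊤ : ℕ∞) ρ')
    (hρs : HasCompactSupport ρ) (hρW : tsupport ρ ⊆ W)
    (hρ's : HasCompactSupport ρ') (hρ'W : tsupport ρ' ⊆ W)
    (hρ1 : ∃ V : Set ℂ, IsOpen V ∧ K ⊆ V ∧ ∀ z ∈ V, ρ z = 1)
    (hρ'1 : ∃ V : Set ℂ, IsOpen V ∧ K ⊆ V ∧ ∀ z ∈ V, ρ' z = 1)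
    (F F' : ℂ → ℂ)
    (hF : ∀ z ∉ K, F z = f z * dbar (fun w => (ρ w : ℂ)) z)
    (hF0 : ∀ z ∈ K, F z = 0)
    (hF' : ∀ z ∉ K, F' z = f z * dbar (fun w => (ρ' w : ℂ)) z)
    (hF'0 : ∀ z ∈ K, F' z = 0) :
    (ContDiff ℝ (⊤ : ℕ∞) F ∧ IsCompact (tsupport F) ∧ tsupport F ⊆ W) ∧
    (ContDiff ℝ (⊤ : ℕ∞) F' ∧ IsCompact (tsupport F') ∧ tsupport F' ⊆ W) ∧
    ∃ h : ℂ → ℂ, ContDiff ℝ (⊤ : ℕ∞) h ∧ IsCompact (tsupport h) ∧ tsupport h ⊆ W ∧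
      ∀ z : ℂ, dbar h z = F z - F' z := by
  refine ⟨aux_form W K hK f hf ρ hρ hρs hρW hρ1 F hF hF0,
    aux_form W K hK f hf ρ' hρ' hρ's hρ'W hρ'1 F' hF' hF'0, ?_⟩
  obtain ⟨V, hV, hKV, hV1⟩ := hρ1
  obtain ⟨V', hV', hKV', hV1'⟩ := hρ'1
  have hc : ContDiff ℝ (⊤ : ℕ∞) (fun w => (ρ w : ℂ)) := Complex.ofRealCLM.contDiff.comp hρ
  have hc' : ContDiff ℝ (⊤ : ℕ∞) (fun w => (ρ' w : ℂ)) := Complex.ofRealCLM.contDiff.comp hρ'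
  have hz0 : ∀ z ∈ V ∩ V', (ρ z : ℂ) - ρ' z = 0 := by
    intro z hz
    simp [hV1 z hz.1, hV1' z hz.2]
  have hs : tsupport (fun z => f z * ((ρ z : ℂ) - ρ' z)) ⊆ tsupport ρ ∪ tsupport ρ' := by
    refine aux_supp K f (fun z => (ρ z : ℂ) - ρ' z) _ _
      ((isClosed_tsupport ρ).union (isClosed_tsupport ρ')) ?_ (fun _ _ => rfl) ?_
    · intro z hz
      simp only [Set.mem_union, not_or] at hz
      simp [image_eq_zero_of_notMem_tsupport hz.1, image_eq_zero_of_notMem_tsupport hz.2]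
    · intro z hz
      simp only [hz0 z ⟨hKV hz, hKV' hz⟩, mul_zero]
  refine ⟨fun z => f z * ((ρ z : ℂ) - ρ' z), ?_, ?_, ?_, ?_⟩
  · refine aux_smooth K hK f hf (fun z => (ρ z : ℂ) - ρ' z) _ (hc.sub hc') (V ∩ V')
      (hV.inter hV') (Set.subset_inter hKV hKV') hz0 (fun _ _ => rfl) ?_
    intro z hz
    simp only [hz0 z ⟨hKV hz, hKV' hz⟩, mul_zero]
  · exact (hρs.isCompact.union hρ's.isCompact).of_isClosed_subset (isClosed_tsupport _) hs
  · exact hs.trans (Set.union_subset hρW hρ'W)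
  · intro z
    by_cases hz : z ∈ K
    · rw [hF0 z hz, hF'0 z hz, sub_zero, ← dbar_fconst 0 z]
      apply dbar_congr
      filter_upwards [(hV.inter hV').mem_nhds ⟨hKV hz, hKV' hz⟩] with w hw
      rw [hz0 w hw, mul_zero]
    · rw [hF z hz, hF' z hz]
      have hn : Kᶜ ∈ nhds z := hK.isClosed.isOpen_compl.mem_nhds hz
      have hfz : HasDerivAt f (deriv f z) z := (hf.differentiableAt hn).hasDerivAt
      have hfr := hfz.hasFDerivAt.restrictScalars ℝ
      have hd := (hc.differentiable (by simp) z).hasFDerivAt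
      have hd' := (hc'.differentiable (by simp) z).hasFDerivAt
      have hm := (hfr.mul (hd.sub hd')).fderiv
      have hm' : fderiv ℝ (fun z => f z * ((ρ z : ℂ) - ρ' z)) z = _ := hm
      unfold dbar
      rw [hm']
      simp
      linear_combination (1/2) * ((ρ z : ℂ) - ρ' z) * deriv f z * Complex.I_mul_I
end

section
/- (Lemma 2.4, second part, concrete form.) Let W ⊆ ℂ be a bounded open set, let g : ℂ → ℂ be smooth with tsupport g compact and contained in W, and let ρ : ℂ → ℝ be smooth with tsupport ρ compact and contained in W and with ρ identically 1 on a neighborhood of tsupport g. Then the function ρ·(Tg) is smooth with compact support contained in W and satisfies ∂̄(ρ·Tg) = g + (∂̄ρ)·(Tg). In particular the smooth compactly supported function g + (∂̄ρ)·(Tg) is ∂̄-exact via a smooth function with compact support contained in W. -/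
open MeasureTheory

noncomputable def polE (θ : ℝ) : ℂ := (Real.cos θ : ℂ) + (Real.sin θ : ℂ) * Complex.I

lemma polE_norm (θ : ℝ) : ‖polE θ‖ = 1 := by
  simp [polE]

lemma polE_cont : Continuous polE := by
  unfold polE; fun_prop

lemma polE_deriv (θ : ℝ) : HasDerivAt polE (Complex.I * polE θ) θ := by
  have h1 := (Real.hasDerivAt_cos θ).ofReal_comp
  have h2 := ((Real.hasDerivAt_sin θ).ofReal_comp).mul_const Complex.I
  have h3 := h1.add h2
  refine h3.congr_deriv ?_
  unfold polE
  push_cast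
  linear_combination (-(Complex.sin θ)) * Complex.I_mul_I

lemma polar_integrableOn (F : ℝ × ℝ → ℂ) (hF : Continuous F) (R : ℝ)
    (h0 : ∀ p : ℝ × ℝ, R < p.1 → F p = 0) :
    IntegrableOn F (Set.Ioi (0 : ℝ) ×ˢ Set.Ioo (-Real.pi) Real.pi) := by
  have h1 : IntegrableOn F (Set.Icc (0 : ℝ) R ×ˢ Set.Icc (-Real.pi) Real.pi) :=
    hF.continuousOn.integrableOn_compact (isCompact_Icc.prod isCompact_Icc)
  refine h1.of_forall_sdiff_eq_zero (measurableSet_Ioi.prod measurableSet_Ioo) ?_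
  rintro ⟨r, θ⟩ ⟨⟨hr, hθ⟩, hn⟩
  apply h0
  by_contra hc
  push Not at hc
  exact hn ⟨⟨le_of_lt hr, hc⟩, ⟨hθ.1.le, hθ.2.le⟩⟩

lemma pompeiu_zero (h : ℂ → ℂ) (hh : ContDiff ℝ 1 h) (hc : HasCompactSupport h) :
    ∫ w : ℂ, dbar h w / w = -(Real.pi : ℂ) * h 0 := by
  obtain ⟨R, hR0, hR⟩ := hc.isCompact.isBounded.subset_closedBall_lt 0 (0 : ℂ)
  have hfd : Continuous (fderiv ℝ h) := hh.continuous_fderiv one_ne_zero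
  have hdiff : Differentiable ℝ h := hh.differentiable one_ne_zero
  have hz : ∀ w : ℂ, R < ‖w‖ → fderiv ℝ h w = 0 := by
    intro w hw
    by_contra hne
    have := hR (support_fderiv_subset ℝ hne)
    simp at this
    linarith
  have hz0 : ∀ w : ℂ, R < ‖w‖ → h w = 0 := by
    intro w hw
    by_contra hne
    have := hR (subset_tsupport _ hne)
    simp at this
    linarith
  let A : ℝ × ℝ → ℂ := fun p => fderiv ℝ h (p.1 * polE p.2) (polE p.2)
  let B : ℝ × ℝ → ℂ := fun p => fderiv ℝ h (p.1 * polE p.2) (Complex.I * polE p.2)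
  have hpc : Continuous (fun p : ℝ × ℝ => polE p.2) := polE_cont.comp continuous_snd
  have hmc : Continuous (fun p : ℝ × ℝ => (p.1 : ℂ) * polE p.2) := by fun_prop
  have hAc : Continuous A := (hfd.comp hmc).clm_apply hpc
  have hBc : Continuous B := (hfd.comp hmc).clm_apply (by fun_prop)
  have hbig : ∀ p : ℝ × ℝ, R < p.1 → R < ‖(p.1 : ℂ) * polE p.2‖ := by
    intro p hp
    rw [norm_mul, polE_norm, mul_one, Complex.norm_real, Real.norm_eq_abs]
    exact lt_of_lt_of_le hp (le_abs_self _)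
  have hAi := polar_integrableOn A hAc R (fun p hp => by simp [A, hz _ (hbig p hp)])
  have hBi := polar_integrableOn B hBc R (fun p hp => by simp [B, hz _ (hbig p hp)])
  have hAint : ∫ p in Set.Ioi (0 : ℝ) ×ˢ Set.Ioo (-Real.pi) Real.pi, A p
      = -(2 * Real.pi : ℂ) * h 0 := by
    have hAi' : Integrable A ((volume.restrict (Set.Ioi (0 : ℝ))).prod
        (volume.restrict (Set.Ioo (-Real.pi) Real.pi))) := by
      rw [Measure.prod_restrict]; exact hAi
    rw [Measure.volume_eq_prod, ← Measure.prod_restrict, integral_prod_symm _ hAi']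
    have : ∀ θ : ℝ, ∫ r in Set.Ioi (0 : ℝ), A (r, θ) = -h 0 := by
      intro θ
      have hd : ∀ r : ℝ, HasDerivAt (fun r : ℝ => h (r * polE θ)) (A (r, θ)) r := by
        intro r
        have h1 : HasDerivAt (fun r : ℝ => (r : ℂ) * polE θ) (polE θ) r := by
          simpa using (hasDerivAt_id r).ofReal_comp.mul_const (polE θ)
        exact (hdiff _).hasFDerivAt.comp_hasDerivAt r h1
      have hAr : Continuous (fun r : ℝ => A (r, θ)) := hAc.comp (by fun_prop)
      have hint : IntegrableOn (fun r : ℝ => A (r, θ)) (Set.Ioi 0) := by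
        have h1 : IntegrableOn (fun r : ℝ => A (r, θ)) (Set.Icc 0 R) :=
          hAr.continuousOn.integrableOn_compact isCompact_Icc
        refine h1.of_forall_sdiff_eq_zero measurableSet_Ioi ?_
        rintro r ⟨hr, hn⟩
        have : R < r := by
          by_contra hc
          push Not at hc
          exact hn ⟨le_of_lt hr, hc⟩
        simp [A, hz _ (hbig (r, θ) this)]
      have ht : Filter.Tendsto (fun r : ℝ => h (r * polE θ)) Filter.atTop (nhds 0) := by
        refine tendsto_const_nhds.congr' ?_
        filter_upwards [Filter.eventually_gt_atTop R] with r hr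
        exact (hz0 _ (hbig (r, θ) hr)).symm
      have := integral_Ioi_of_hasDerivAt_of_tendsto (hd 0).continuousAt.continuousWithinAt
        (fun r _ => hd r) hint ht
      rw [this]; simp
    simp_rw [this]
    rw [setIntegral_const]
    simp [Measure.real, Real.volume_Ioo, Real.pi_pos.le]
    left; ring
  have hBint : ∫ p in Set.Ioi (0 : ℝ) ×ˢ Set.Ioo (-Real.pi) Real.pi, B p = 0 := by
    rw [Measure.volume_eq_prod, setIntegral_prod _ (by rw [← Measure.volume_eq_prod]; exact hBi)]
    refine setIntegral_eq_zero_of_forall_eq_zero ?_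
    intro r hr
    have hr' : (0 : ℝ) < r := hr
    have hd : ∀ θ : ℝ, HasDerivAt (fun θ : ℝ => h (r * polE θ)) ((r : ℂ) * B (r, θ)) θ := by
      intro θ
      have h1 := (polE_deriv θ).const_mul (r : ℂ)
      have h2 := (hdiff (r * polE θ)).hasFDerivAt.comp_hasDerivAt θ h1
      refine h2.congr_deriv ?_
      have : (r : ℂ) * (Complex.I * polE θ) = r • (Complex.I * polE θ) := by simp
      rw [this, map_smul]
      simp [B]
    have hBr : Continuous (fun θ : ℝ => B (r, θ)) := hBc.comp (by fun_prop)
    have h3 := intervalIntegral.integral_eq_sub_of_hasDerivAt (a := -Real.pi) (b := Real.pi)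
      (fun θ _ => hd θ) ((continuous_const.mul hBr).intervalIntegrable _ _)
    have h4 : polE (-Real.pi) = polE Real.pi := by simp [polE]
    rw [h4, sub_self, intervalIntegral.integral_const_mul,
      intervalIntegral.integral_of_le (by linarith [Real.pi_pos]),
      integral_Ioc_eq_integral_Ioo] at h3
    exact (mul_eq_zero.mp h3).resolve_left (by exact_mod_cast hr'.ne')
  rw [← Complex.integral_comp_polarCoord_symm]
  have hcongr : ∫ p in polarCoord.target, p.1 •
      (fun w => dbar h w / w) (Complex.polarCoord.symm p)
      = ∫ p in Set.Ioi (0 : ℝ) ×ˢ Set.Ioo (-Real.pi) Real.pi,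
        ((1 / 2 : ℂ) * A p + (Complex.I / 2) * B p) := by
    refine setIntegral_congr_fun (measurableSet_Ioi.prod measurableSet_Ioo) ?_
    rintro ⟨r, θ⟩ ⟨hr, hθ⟩
    have hr' : (r : ℂ) ≠ 0 := by exact_mod_cast (ne_of_gt hr : r ≠ 0)
    have hp0 : polE θ ≠ 0 := by
      rw [← norm_ne_zero_iff, polE_norm]; exact one_ne_zero
    have hsymm : Complex.polarCoord.symm (r, θ) = r * polE θ := by
      rw [Complex.polarCoord_symm_apply]; rfl
    simp only [hsymm, A, B, dbar]
    set D := fderiv ℝ h (r * polE θ)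
    have e1 : polE θ = Real.cos θ • (1 : ℂ) + Real.sin θ • Complex.I := by
      simp [polE]
    have e2 : Complex.I * polE θ = Real.cos θ • Complex.I - Real.sin θ • (1 : ℂ) := by
      simp [polE]; linear_combination (Complex.sin θ) * Complex.I_mul_I
    have d1 : D (polE θ) = Real.cos θ * D 1 + Real.sin θ * D Complex.I := by
      rw [e1, map_add, map_smul, map_smul]; simp
    have d2 : D (Complex.I * polE θ) = Real.cos θ * D Complex.I - Real.sin θ * D 1 := by
      rw [e2, map_sub, map_smul, map_smul]; simp
    rw [d1, d2, Complex.real_smul]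
    have hcs : (Real.cos θ : ℂ) ^ 2 + (Real.sin θ : ℂ) ^ 2 = 1 := by
      exact_mod_cast Real.cos_sq_add_sin_sq θ
    field_simp
    unfold polE
    set c : ℂ := (Real.cos θ : ℂ)
    set s : ℂ := (Real.sin θ : ℂ)
    linear_combination (-(D 1 + Complex.I * D Complex.I)) * hcs +
      (s ^ 2 * D 1 - c * s * D Complex.I) * Complex.I_sq
  rw [hcongr, integral_add (hAi.const_mul _) (hBi.const_mul _), integral_const_mul,
    integral_const_mul, hAint, hBint]
  ring

lemma inv_locInt : LocallyIntegrable (fun w : ℂ => w⁻¹) := by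
  refine locallyIntegrable_of_norm_le_rpow (C := 1) (α := 1) (by simp) (by simp) ?_ ?_
  · refine Filter.Eventually.of_forall fun w => ?_
    simp [Real.rpow_neg_one]
  · exact measurable_inv.aestronglyMeasurable

lemma cauchyT_eq (g : ℂ → ℂ) :
    cauchyT g = fun z => (1 / (Real.pi : ℂ)) *
      (convolution (fun w : ℂ => w⁻¹) g (ContinuousLinearMap.mul ℝ ℂ) volume) z := by
  funext z
  unfold cauchyT
  rw [convolution_def, ← integral_sub_left_eq_self _ volume z]
  congr 1
  refine integral_congr_ae (Filter.Eventually.of_forall fun t => ?_)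
  simp [div_eq_mul_inv, mul_comm]

lemma cauchyT_contDiff (g : ℂ → ℂ) (hg : ContDiff ℝ (⊤ : ℕ∞) g) (hc : HasCompactSupport g) :
    ContDiff ℝ (⊤ : ℕ∞) (cauchyT g) := by
  rw [cauchyT_eq]
  exact contDiff_const.mul (hc.contDiff_convolution_right _ inv_locInt hg)

lemma cauchyT_dbar (g : ℂ → ℂ) (hg : ContDiff ℝ (⊤ : ℕ∞) g) (hc : HasCompactSupport g) (z : ℂ) :
    dbar (cauchyT g) z = g z := by
  have hg1 : ContDiff ℝ 1 g := hg.of_le (by exact_mod_cast le_top)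
  have hfc := hg1.continuous_fderiv one_ne_zero
  have hfs : HasCompactSupport (fderiv ℝ g) := hc.fderiv ℝ
  have hgd : Differentiable ℝ g := hg1.differentiable one_ne_zero
  have hD := (hc.hasFDerivAt_convolution_right (ContinuousLinearMap.mul ℝ ℂ)
    inv_locInt hg1 z).const_mul (1 / (Real.pi : ℂ))
  rw [← cauchyT_eq] at hD
  have hv : ∀ v : ℂ, fderiv ℝ (cauchyT g) z v =
      (1 / (Real.pi : ℂ)) * ∫ t : ℂ, t⁻¹ * fderiv ℝ g (z - t) v := by
    intro v
    rw [hD.fderiv]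
    rw [smul_apply, smul_eq_mul]
    congr 1
    exact convolution_precompR_apply (ContinuousLinearMap.mul ℝ ℂ) inv_locInt hfs hfc z v
  have hint : ∀ v : ℂ, Integrable (fun t : ℂ => t⁻¹ * fderiv ℝ g (z - t) v) := by
    intro v
    have h1 : HasCompactSupport (fun a => fderiv ℝ g a v) :=
      hfs.comp_left (g := fun L : ℂ →L[ℝ] ℂ => L v) (by simp)
    exact h1.convolutionExists_right (ContinuousLinearMap.mul ℝ ℂ) inv_locInt
      (hfc.clm_apply continuous_const) z
  have hp := pompeiu_zero (fun w => g (z - w)) (hg1.comp (contDiff_const.sub contDiff_id))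
    (hc.comp_homeomorph (Homeomorph.subLeft z))
  have hdb : ∀ w v : ℂ, fderiv ℝ (fun w => g (z - w)) w v = - fderiv ℝ g (z - w) v := by
    intro w v
    have h1 : HasFDerivAt (fun w : ℂ => z - w) (-ContinuousLinearMap.id ℝ ℂ) w :=
      (hasFDerivAt_id w).const_sub z
    have := (hgd (z - w)).hasFDerivAt.comp w h1
    have h2 : fderiv ℝ (fun w => g (z - w)) w = _ := this.fderiv
    rw [h2]; simp
  have hp2 : ∫ w : ℂ, dbar (fun w => g (z - w)) w / w =
      ∫ w : ℂ, ((-1 / 2 : ℂ) * (w⁻¹ * fderiv ℝ g (z - w) 1) +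
        (-Complex.I / 2) * (w⁻¹ * fderiv ℝ g (z - w) Complex.I)) := by
    congr 1
    funext w
    simp only [dbar, hdb]
    ring
  rw [hp2, integral_add ((hint 1).const_mul _) ((hint Complex.I).const_mul _),
    integral_const_mul, integral_const_mul, sub_zero] at hp
  have hpi : (Real.pi : ℂ) ≠ 0 := by exact_mod_cast Real.pi_ne_zero
  unfold dbar
  rw [hv, hv]
  generalize (∫ t : ℂ, t⁻¹ * fderiv ℝ g (z - t) 1) = X at *
  generalize (∫ t : ℂ, t⁻¹ * fderiv ℝ g (z - t) Complex.I) = Y at *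
  field_simp
  linear_combination (-2) * hp

/-- Lemma 2.4, second part (concrete form): with `g` smooth with compact support in the
bounded open set `W` and `ρ` a smooth bump with compact support in `W` equal to `1` near
`tsupport g`, the function `ρ·(Tg)` is smooth with compact support in `W` and satisfies
`∂̄(ρ·Tg) = g + (∂̄ρ)·(Tg)`; in particular `g + (∂̄ρ)·(Tg)` is `∂̄`-exact via a smooth
function with compact support contained in `W`. -/
theorem rho_mul_cauchyT_dbar (W : Set ℂ) (hW : IsOpen W) (hWb : Bornology.IsBounded W)
    (g : ℂ → ℂ) (hg : ContDiff ℝ (⊤ : ℕ∞) g) (hgc : IsCompact (tsupport g)) (hgW : tsupport g ⊆ W)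
    (ρ : ℂ → ℝ) (hρ : ContDiff ℝ (⊤ : ℕ∞) ρ) (hρc : IsCompact (tsupport ρ)) (hρW : tsupport ρ ⊆ W)
    (hρ1 : ∃ V : Set ℂ, IsOpen V ∧ tsupport g ⊆ V ∧ ∀ z ∈ V, ρ z = 1) :
    (ContDiff ℝ (⊤ : ℕ∞) (fun z => (ρ z : ℂ) * cauchyT g z) ∧
      IsCompact (tsupport fun z => (ρ z : ℂ) * cauchyT g z) ∧
      (tsupport fun z => (ρ z : ℂ) * cauchyT g z) ⊆ W ∧
      ∀ z : ℂ, dbar (fun w => (ρ w : ℂ) * cauchyT g w) z =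
        g z + dbar (fun w => (ρ w : ℂ)) z * cauchyT g z) ∧
    ∃ h : ℂ → ℂ, ContDiff ℝ (⊤ : ℕ∞) h ∧ IsCompact (tsupport h) ∧ tsupport h ⊆ W ∧
      ∀ z : ℂ, dbar h z = g z + dbar (fun w => (ρ w : ℂ)) z * cauchyT g z := by
  have hT := cauchyT_contDiff g hg hgc
  have hρ' : ContDiff ℝ (⊤ : ℕ∞) (fun z => (ρ z : ℂ)) :=
    Complex.ofRealCLM.contDiff.comp hρ
  have hsub : (tsupport fun z => (ρ z : ℂ) * cauchyT g z) ⊆ tsupport ρ := by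
    refine closure_mono ?_
    intro z hz hz0
    exact hz (by simp [hz0])
  have hmain : ContDiff ℝ (⊤ : ℕ∞) (fun z => (ρ z : ℂ) * cauchyT g z) ∧
      IsCompact (tsupport fun z => (ρ z : ℂ) * cauchyT g z) ∧
      (tsupport fun z => (ρ z : ℂ) * cauchyT g z) ⊆ W ∧
      ∀ z : ℂ, dbar (fun w => (ρ w : ℂ) * cauchyT g w) z =
        g z + dbar (fun w => (ρ w : ℂ)) z * cauchyT g z := by
    refine ⟨hρ'.mul hT, hρc.of_isClosed_subset (isClosed_tsupport _) hsub, hsub.trans hρW, ?_⟩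
    intro z
    have hρg : (ρ z : ℂ) * g z = g z := by
      obtain ⟨V, -, hV, h1⟩ := hρ1
      by_cases hz : z ∈ tsupport g
      · simp [h1 z (hV hz)]
      · simp [image_eq_zero_of_notMem_tsupport hz]
    have hd := cauchyT_dbar g hg hgc z
    have hm := ((hρ'.differentiable (by simp) z).hasFDerivAt.mul
      (hT.differentiable (by simp) z).hasFDerivAt).fderiv
    have hm' : fderiv ℝ (fun w => (ρ w : ℂ) * cauchyT g w) z = _ := hm
    rw [← hρg, ← hd]
    unfold dbar
    rw [hm']
    simp only [add_apply, smul_apply, smul_eq_mul]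
    ring
  exact ⟨hmain, _, hmain⟩
end

section
/- (Lemma 3.2, the residue integral.) Let p ∈ ℂ, n ∈ ℤ, and let ρ : ℂ → ℝ be smooth with compact support and identically 1 on a neighborhood of p. Then −(1/π) ∫_ℂ (z − p)^n · (∂̄ρ)(z) dA(z) = 1 if n = −1 and = 0 otherwise. (For n < 0 the integrand is extended by 0 at z = p; this is harmless since ∂̄ρ vanishes on a neighborhood of p.) -/
open MeasureTheory

theorem aux_polar_div (H : ℂ → ℂ) (q : ℝ × ℝ)
    (hH : DifferentiableAt ℝ H ((q.1 : ℂ) * Complex.exp (q.2 * Complex.I))) :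
    DifferentiableAt ℝ (fun x : ℝ × ℝ => (x.1 : ℂ) * Complex.exp (x.2 * Complex.I) *
      H ((x.1 : ℂ) * Complex.exp (x.2 * Complex.I))) q ∧
    DifferentiableAt ℝ (fun x : ℝ × ℝ => Complex.I * Complex.exp (x.2 * Complex.I) *
      H ((x.1 : ℂ) * Complex.exp (x.2 * Complex.I))) q ∧
    fderiv ℝ (fun x : ℝ × ℝ => (x.1 : ℂ) * Complex.exp (x.2 * Complex.I) *
      H ((x.1 : ℂ) * Complex.exp (x.2 * Complex.I))) q (1, 0) +
    fderiv ℝ (fun x : ℝ × ℝ => Complex.I * Complex.exp (x.2 * Complex.I) *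
      H ((x.1 : ℂ) * Complex.exp (x.2 * Complex.I))) q (0, 1) =
      2 * (q.1 * dbar H ((q.1 : ℂ) * Complex.exp (q.2 * Complex.I))) := by
  obtain ⟨r, θ⟩ := q
  dsimp only at hH ⊢
  have h1 : Differentiable ℝ (fun x : ℝ × ℝ => (x.1 : ℂ)) :=
    Complex.ofRealCLM.differentiable.comp differentiable_fst
  have h2 : Differentiable ℝ (fun x : ℝ × ℝ => (x.2 : ℂ)) :=
    Complex.ofRealCLM.differentiable.comp differentiable_snd
  have h3 : Differentiable ℝ (fun x : ℝ × ℝ => Complex.exp (x.2 * Complex.I)) :=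
    (h2.mul_const _).cexp
  have hc : DifferentiableAt ℝ (fun x : ℝ × ℝ =>
      H ((x.1 : ℂ) * Complex.exp (x.2 * Complex.I))) (r, θ) :=
    DifferentiableAt.comp (r, θ) (g := H)
      (f := fun x : ℝ × ℝ => (x.1 : ℂ) * Complex.exp (x.2 * Complex.I)) hH ((h1.mul h3) _)
  have hf := ((h1.mul h3) (r, θ)).mul hc
  have hg := ((h3.const_mul Complex.I) (r, θ)).mul hc
  refine ⟨hf, hg, ?_⟩
  set E := Complex.exp (θ * Complex.I) with hE
  set L := fderiv ℝ H (r * E) with hL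
  have e1 : HasDerivAt (fun t : ℝ => ((t, θ) : ℝ × ℝ)) (1, 0) r :=
    (hasDerivAt_id r).prodMk (hasDerivAt_const r θ)
  have e2 : HasDerivAt (fun t : ℝ => ((r, t) : ℝ × ℝ)) (0, 1) θ :=
    (hasDerivAt_const θ r).prodMk (hasDerivAt_id θ)
  have k1 := hf.hasFDerivAt.comp_hasDerivAt r e1
  have k2 := hg.hasFDerivAt.comp_hasDerivAt θ e2
  have w1 : HasDerivAt (fun t : ℝ => (t : ℂ) * E) (1 * E) r :=
    (Complex.ofRealCLM.hasDerivAt (x := r)).mul_const E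
  have x2 : HasDerivAt (fun t : ℝ => Complex.exp (t * Complex.I)) (E * (1 * Complex.I)) θ :=
    ((Complex.ofRealCLM.hasDerivAt (x := θ)).mul_const Complex.I).cexp
  have w2 := x2.const_mul (r : ℂ)
  have d1 := w1.mul (hH.hasFDerivAt.comp_hasDerivAt r w1)
  have d2 := (x2.const_mul Complex.I).mul (hH.hasFDerivAt.comp_hasDerivAt θ w2)
  have u1 := k1.unique d1
  have u2 := k2.unique d2
  have key : ∀ v : ℂ, L v = v.re * L 1 + v.im * L Complex.I := by
    intro v
    have : v = v.re • (1 : ℂ) + v.im • Complex.I := by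
      simp [Complex.re_add_im]
    conv_lhs => rw [this]
    rw [map_add, map_smul, map_smul]; simp
  refine (congrArg₂ (· + ·) u1 u2).trans ?_
  have hEE : E = Real.cos θ + Real.sin θ * Complex.I := by
    rw [hE, Complex.exp_mul_I]; simp
  have hre : E.re = Real.cos θ := by
    rw [hE]; exact Complex.exp_ofReal_mul_I_re θ
  have him : E.im = Real.sin θ := by
    rw [hE]; exact Complex.exp_ofReal_mul_I_im θ
  have hcs : (Real.cos θ : ℂ)^2 + (Real.sin θ : ℂ)^2 = 1 := by
    exact_mod_cast Real.cos_sq_add_sin_sq θ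
  simp only [Function.comp, dbar, ← hE]
  rw [← hL, key (1 * E), key ((r : ℂ) * (E * (1 * Complex.I)))]
  simp only [one_mul, Complex.mul_re, Complex.mul_im, hre, him, Complex.ofReal_re,
    Complex.ofReal_im, Complex.I_re, Complex.I_im, mul_zero, mul_one, zero_mul, zero_sub, sub_zero,
    add_zero, zero_add]
  push_cast
  rw [hEE]
  have hI := Complex.I_sq
  push_cast at hcs ⊢
  generalize H _ = h0
  generalize L 1 = a
  generalize L Complex.I = b
  generalize Complex.cos θ = c at *
  generalize Complex.sin θ = s at *
  linear_combination ((c + s * Complex.I) * h0 + r * c*s*b - r * s^2 * a) * hI +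
    (r * a + r * Complex.I * b) * hcs

theorem aux_dbar_s10 (n : ℤ) (ρ : ℂ → ℂ) (w : ℂ) (hw : w ≠ 0) (hd : DifferentiableAt ℝ ρ w) :
    DifferentiableAt ℝ (fun w => w ^ n * ρ w) w ∧
    dbar (fun w => w ^ n * ρ w) w = w ^ n * dbar ρ w := by
  have h := (hasDerivAt_zpow n w (Or.inl hw)).hasFDerivAt.restrictScalars ℝ
  have h2 := h.mul hd.hasFDerivAt
  refine ⟨h2.differentiableAt, ?_⟩
  unfold dbar
  have h3 : fderiv ℝ (fun w => w ^ n * ρ w) w = _ := h2.fderiv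
  rw [h3]
  simp
  ring_nf
  simp

theorem aux_main (n : ℤ) (σ : ℂ → ℂ) (hσ : ContDiff ℝ 1 σ) (ε R : ℝ) (hε : 0 < ε) (hR : ε < R)
    (h1 : ∀ w, ‖w‖ ≤ ε → σ w = 1 ∧ dbar σ w = 0) (h0 : ∀ w, R ≤ ‖w‖ → σ w = 0 ∧ dbar σ w = 0) :
    ∫ w : ℂ, w ^ n * dbar σ w = if n = -1 then -(Real.pi : ℂ) else 0 := by
  have hpi := Real.pi_pos
  have hcd : Continuous (dbar σ) := by
    unfold dbar
    have := hσ.continuous_fderiv (by norm_num)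
    fun_prop
  set W : ℝ × ℝ → ℂ := fun q => (q.1 : ℂ) * Complex.exp (q.2 * Complex.I) with hW
  have hWc : Continuous W := by fun_prop
  have hWn : ∀ q : ℝ × ℝ, 0 < q.1 → ‖W q‖ = q.1 := by
    intro q hq
    simp [hW, Complex.norm_exp_ofReal_mul_I, abs_of_pos hq]
  have hW0 : ∀ q : ℝ × ℝ, 0 < q.1 → W q ≠ 0 := by
    intro q hq h
    have := hWn q hq
    rw [h, norm_zero] at this
    linarith
  set K : ℝ × ℝ → ℂ := fun q => (q.1 : ℂ) * ((W q) ^ n * dbar σ (W q)) with hK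
  have hWe : ∀ q, Complex.polarCoord.symm q = W q := by
    intro q
    rw [Complex.polarCoord_symm_apply]
    simp [hW, Complex.exp_mul_I]
  have s1 : ∫ w : ℂ, w ^ n * dbar σ w = ∫ q in polarCoord.target, K q := by
    rw [← Complex.integral_comp_polarCoord_symm]
    simp only [hWe, hK, Complex.real_smul]
  set f : ℝ × ℝ → ℂ := fun x => (x.1 : ℂ) * Complex.exp (x.2 * Complex.I) *
      (fun w => w ^ n * σ w) ((x.1 : ℂ) * Complex.exp (x.2 * Complex.I)) with hf
  set g : ℝ × ℝ → ℂ := fun x => Complex.I * Complex.exp (x.2 * Complex.I) *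
      (fun w => w ^ n * σ w) ((x.1 : ℂ) * Complex.exp (x.2 * Complex.I)) with hg
  have hfg : ∀ q : ℝ × ℝ, 0 < q.1 → DifferentiableAt ℝ f q ∧ DifferentiableAt ℝ g q ∧
      fderiv ℝ f q (1, 0) + fderiv ℝ g q (0, 1) = 2 * K q := by
    intro q hq
    obtain ⟨a1, a2⟩ := aux_dbar_s10 n σ (W q) (hW0 q hq) (hσ.differentiable (by norm_num) _)
    have := aux_polar_div (fun w => w ^ n * σ w) q a1
    refine ⟨this.1, this.2.1, this.2.2.trans ?_⟩
    change 2 * (q.1 * dbar (fun w => w ^ n * σ w) (W q)) = _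
    rw [a2]
  have hKc : ∀ q : ℝ × ℝ, 0 < q.1 → ContinuousAt K q := by
    intro q hq
    have b1 : ContinuousAt (fun q => (W q) ^ n) q :=
      hWc.continuousAt.zpow₀ n (Or.inl (hW0 q hq))
    have b2 : ContinuousAt (fun q => dbar σ (W q)) q := (hcd.comp hWc).continuousAt
    have b3 : ContinuousAt (fun q : ℝ × ℝ => (q.1 : ℂ)) q := by fun_prop
    exact b3.mul (b1.mul b2)
  have s2 : ∫ q in polarCoord.target, K q = ∫ q in Set.Icc (ε, -Real.pi) (R, Real.pi), K q := by
    have hsub : Set.Ioo ε R ×ˢ Set.Ioo (-Real.pi) Real.pi ⊆ polarCoord.target := by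
      rintro ⟨r, θ⟩ ⟨hr, hθ⟩
      exact ⟨hε.trans hr.1, hθ⟩
    have t1 : ∫ q in polarCoord.target, K q =
        ∫ q in Set.Ioo ε R ×ˢ Set.Ioo (-Real.pi) Real.pi, K q := by
      refine setIntegral_eq_of_subset_of_forall_sdiff_eq_zero
        polarCoord.open_target.measurableSet hsub ?_
      rintro ⟨r, θ⟩ ⟨⟨hr, hθ⟩, hn⟩
      have hr' : 0 < r := hr
      have hno := hWn (r, θ) hr'
      have : dbar σ (W (r, θ)) = 0 := by
        by_cases c1 : r ≤ ε
        · exact (h1 _ (hno.le.trans c1)).2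
        · by_cases c2 : R ≤ r
          · exact (h0 _ (c2.trans hno.ge)).2
          · exact absurd ⟨⟨not_le.1 c1, not_le.1 c2⟩, hθ⟩ hn
      simp [hK, this]
    rw [t1, ← Set.Icc_prod_Icc]
    exact setIntegral_congr_set (Measure.set_prod_ae_eq Ioo_ae_eq_Icc Ioo_ae_eq_Icc)
  have hpos : ∀ q ∈ Set.Icc (ε, -Real.pi) (R, Real.pi), 0 < q.1 :=
    fun q hq => hε.trans_le hq.1.1
  have hint : IntegrableOn (fun q => fderiv ℝ f q (1, 0) + fderiv ℝ g q (0, 1))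
      (Set.Icc (ε, -Real.pi) (R, Real.pi)) := by
    have : IntegrableOn (fun q => 2 * K q) (Set.Icc (ε, -Real.pi) (R, Real.pi)) := by
      refine ContinuousOn.integrableOn_compact isCompact_Icc ?_
      intro q hq
      exact ((hKc q (hpos q hq)).const_mul 2).continuousWithinAt
    exact this.congr_fun (fun q hq => ((hfg q (hpos q hq)).2.2).symm) measurableSet_Icc
  have D := integral_divergence_prod_Icc_of_hasFDerivAt_of_le f g (fderiv ℝ f) (fderiv ℝ g)
    (ε, -Real.pi) (R, Real.pi) ⟨hR.le, by simp; linarith⟩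
    (fun q hq => (hfg q (hpos q hq)).1.continuousAt.continuousWithinAt)
    (fun q hq => (hfg q (hpos q hq)).2.1.continuousAt.continuousWithinAt)
    (fun q hq => (hfg q (hε.trans hq.1.1)).1.hasFDerivAt)
    (fun q hq => (hfg q (hε.trans hq.1.1)).2.1.hasFDerivAt) hint
  have s3 : ∫ q in Set.Icc (ε, -Real.pi) (R, Real.pi),
      (fderiv ℝ f q (1, 0) + fderiv ℝ g q (0, 1)) =
      2 * ∫ q in Set.Icc (ε, -Real.pi) (R, Real.pi), K q := by
    rw [← integral_const_mul]
    exact setIntegral_congr_fun measurableSet_Icc (fun q hq => (hfg q (hpos q hq)).2.2)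
  rw [s3] at D
  have g1 : ∀ x : ℝ, g (x, Real.pi) = g (x, -Real.pi) := by
    intro x
    have : Complex.exp ((-Real.pi : ℝ) * Complex.I) = Complex.exp ((Real.pi : ℝ) * Complex.I) := by
      push_cast
      rw [neg_mul, Complex.exp_neg, Complex.exp_pi_mul_I]; norm_num
    simp only [hg, this]
  have f1 : ∀ y : ℝ, f (R, y) = 0 := by
    intro y
    have := (h0 (W (R, y)) (hWn (R, y) (hε.trans hR)).ge).1
    simp only [hW] at this
    simp [hf, this]
  have f2 : ∀ y : ℝ, f (ε, y) = (ε : ℂ) ^ (n + 1) * Complex.exp ((n + 1 : ℤ) * Complex.I * y) := by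
    intro y
    have t := (h1 (W (ε, y)) (hWn (ε, y) hε).le).1
    have t0 := hW0 (ε, y) hε
    change W (ε, y) * (W (ε, y) ^ n * σ (W (ε, y))) = _
    rw [t, mul_one, ← zpow_one_add₀ t0, add_comm]
    simp only [hW]
    rw [mul_zpow, ← Complex.exp_int_mul]
    congr 2
    ring
  simp only [g1, f1, f2, sub_self, intervalIntegral.integral_zero, zero_add, zero_sub] at D
  rw [intervalIntegral.integral_const_mul] at D
  rw [s1, s2]
  split_ifs with hn
  · subst hn
    simp at D
    linear_combination D / 2
  · have hn' : ((n + 1 : ℤ) : ℂ) * Complex.I ≠ 0 := by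
      refine mul_ne_zero ?_ Complex.I_ne_zero
      exact_mod_cast (fun h => hn (by omega))
    rw [integral_exp_mul_complex hn'] at D
    have : Complex.exp ((n + 1 : ℤ) * Complex.I * (Real.pi : ℝ)) =
        Complex.exp ((n + 1 : ℤ) * Complex.I * (-Real.pi : ℝ)) := by
      rw [Complex.exp_eq_exp_iff_exists_int]
      exact ⟨n + 1, by push_cast; ring⟩
    rw [this] at D
    simpa using D

/-- Lemma 3.2 (the residue integral): for `ρ` a smooth compactly supported bump equal to
`1` near `p` and any `n : ℤ`,
`−(1/π) ∫_ℂ (z − p)^n · ∂̄ρ(z) dA(z) = δ_{n,−1}`. -/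
theorem residue_integral (p : ℂ) (n : ℤ) (ρ : ℂ → ℝ) (hρ : ContDiff ℝ (⊤ : ℕ∞) ρ)
    (hρs : HasCompactSupport ρ)
    (hρ1 : ∃ V : Set ℂ, IsOpen V ∧ p ∈ V ∧ ∀ z ∈ V, ρ z = 1) :
    -(1 / (Real.pi : ℂ)) * ∫ z : ℂ, (z - p) ^ n * dbar (fun w => (ρ w : ℂ)) z =
      if n = -1 then 1 else 0 := by
  obtain ⟨V, hVo, hpV, hV⟩ := hρ1
  have hshift : ∀ w, dbar (fun w => (ρ (w + p) : ℂ)) w = dbar (fun w => (ρ w : ℂ)) (w + p) := by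
    intro w
    unfold dbar
    rw [fderiv_comp_add_right (f := fun w => (ρ w : ℂ)) p]
  have hconst : ∀ (c : ℂ) (U : Set ℂ), IsOpen U → (∀ z ∈ U, (ρ z : ℂ) = c) →
      ∀ z ∈ U, dbar (fun w => (ρ w : ℂ)) z = 0 := by
    intro c U hU h z hz
    have : (fun w => (ρ w : ℂ)) =ᶠ[nhds z] fun _ => c := by
      filter_upwards [hU.mem_nhds hz] with x hx using h x hx
    unfold dbar
    rw [this.fderiv_eq]
    simp
  obtain ⟨ε, hε, hεV⟩ := Metric.nhds_basis_closedBall.mem_iff.1 (hVo.mem_nhds hpV)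
  obtain ⟨R, hR, hRs⟩ := hρs.isCompact.isBounded.subset_ball_lt ε p
  have hsm : ContDiff ℝ 1 (fun w => (ρ (w + p) : ℂ)) := by
    have h2 : ContDiff ℝ 1 ρ := hρ.of_le (by exact_mod_cast le_top)
    exact Complex.ofRealCLM.contDiff.comp (h2.comp (contDiff_id.add contDiff_const))
  have key := aux_main n (fun w => (ρ (w + p) : ℂ)) hsm ε R hε hR
    (by
      intro w hw
      have hm : w + p ∈ V := hεV (by simpa [Metric.mem_closedBall, dist_eq_norm] using hw)
      refine ⟨by simp [hV _ hm], ?_⟩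
      rw [hshift]
      exact hconst 1 V hVo (fun z hz => by simp [hV z hz]) _ hm)
    (by
      intro w hw
      have hm : w + p ∈ (tsupport ρ)ᶜ := by
        intro h
        have := hRs h
        rw [Metric.mem_ball, dist_eq_norm, add_sub_cancel_right] at this
        linarith
      have hz : ∀ z ∈ (tsupport ρ)ᶜ, (ρ z : ℂ) = 0 := by
        intro z hz
        simp [image_eq_zero_of_notMem_tsupport hz]
      refine ⟨hz _ hm, ?_⟩
      rw [hshift]
      exact hconst 0 _ (isClosed_tsupport ρ).isOpen_compl hz _ hm)
  have e : ∫ z : ℂ, (z - p) ^ n * dbar (fun w => (ρ w : ℂ)) z =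
      if n = -1 then -(Real.pi : ℂ) else 0 := by
    rw [← key, ← integral_add_right_eq_self _ p]
    simp only [hshift, add_sub_cancel_right]
  rw [e]
  have hpi : (Real.pi : ℂ) ≠ 0 := by exact_mod_cast Real.pi_ne_zero
  split_ifs
  · field_simp
  · simp
end

section
/- (Surjectivity onto germs vanishing at infinity: the H¹-surjectivity part of Theorem 2.5 in concrete form.) Let W ⊆ ℂ be a bounded open set, K ⊆ W a compact set, and f : ℂ → ℂ a function holomorphic on ℂ \ K with f(λ) → 0 as |λ| → ∞. Then there exist a smooth g : ℂ → ℂ with tsupport g compact and contained in W and a compact set K′ ⊆ W such that (Tg)(λ) = f(λ) for all λ ∈ ℂ \ K′. -/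
open MeasureTheory

open Set Filter Topology in
theorem polarE_hasDerivAt (t : ℝ) :
    HasDerivAt (fun t : ℝ => ((Real.cos t : ℂ) + (Real.sin t : ℂ) * Complex.I))
      (Complex.I * ((Real.cos t : ℂ) + (Real.sin t : ℂ) * Complex.I)) t := by
  have h1 := (Real.hasDerivAt_cos t).ofReal_comp
  have h2 := ((Real.hasDerivAt_sin t).ofReal_comp).mul_const Complex.I
  refine (h1.add h2).congr_deriv ?_
  push_cast
  linear_combination (-Complex.sin t : ℂ) * Complex.I_sq

theorem polarE_norm (t : ℝ) : ‖((Real.cos t : ℂ) + (Real.sin t : ℂ) * Complex.I)‖ = 1 := by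
  have := Complex.norm_exp_ofReal_mul_I t
  rwa [Complex.exp_mul_I, ← Complex.ofReal_cos, ← Complex.ofReal_sin] at this

noncomputable def dbarOp (F : ℂ → ℂ) (z : ℂ) : ℂ :=
  (1 / 2) * (fderiv ℝ F z 1 + Complex.I * fderiv ℝ F z Complex.I)

theorem dbarOp_polar (F : ℂ → ℂ) (p : ℂ) (t : ℝ) :
    dbarOp F p / ((Real.cos t : ℂ) + (Real.sin t : ℂ) * Complex.I) =
      (1 / 2) * (fderiv ℝ F p ((Real.cos t : ℂ) + (Real.sin t : ℂ) * Complex.I) +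
        Complex.I * fderiv ℝ F p (Complex.I * ((Real.cos t : ℂ) + (Real.sin t : ℂ) * Complex.I))) := by
  have h0 : ((Real.cos t : ℂ) + (Real.sin t : ℂ) * Complex.I) ≠ 0 := by
    rw [← norm_ne_zero_iff, polarE_norm]; exact one_ne_zero
  have e1 : ((Real.cos t : ℂ) + (Real.sin t : ℂ) * Complex.I) =
      (Real.cos t) • (1 : ℂ) + (Real.sin t) • Complex.I := by simp
  have e2 : Complex.I * ((Real.cos t : ℂ) + (Real.sin t : ℂ) * Complex.I) =
      (-Real.sin t) • (1 : ℂ) + (Real.cos t) • Complex.I := by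
    simp only [Complex.real_smul]; push_cast
    linear_combination (Complex.sin t : ℂ) * Complex.I_sq
  rw [div_eq_iff h0, e2]
  conv_rhs => enter [1]; rw [e1]
  simp only [map_add, map_smul]
  simp only [Complex.real_smul, dbarOp]
  have h3 : (Real.cos t : ℂ) ^ 2 + (Real.sin t : ℂ) ^ 2 = 1 := by
    exact_mod_cast Real.cos_sq_add_sin_sq t
  push_cast at h3 ⊢
  generalize fderiv ℝ F p 1 = A
  generalize fderiv ℝ F p Complex.I = B
  linear_combination (-1 / 2) * (A + Complex.I * B) * h3 + (Complex.sin t * (Complex.sin t * A - Complex.cos t * B) / 2) * Complex.I_sq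

theorem dbarOp_continuous {F : ℂ → ℂ} (hF : ContDiff ℝ (⊤ : ℕ∞) F) : ContDiff ℝ (⊤ : ℕ∞) (dbarOp F) := by
  have h : ContDiff ℝ (⊤ : ℕ∞) (fderiv ℝ F) := hF.fderiv_right (by simp)
  unfold dbarOp
  fun_prop

theorem integrableOn_rect {G : ℝ → ℝ → ℂ} (hG : Continuous (Function.uncurry G)) (a b c d : ℝ) :
    IntegrableOn (Function.uncurry G) (Set.uIoc a b ×ˢ Set.uIoc c d) := by
  have : IntegrableOn (Function.uncurry G) (Set.uIcc a b ×ˢ Set.uIcc c d) :=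
    hG.continuousOn.integrableOn_compact (isCompact_uIcc.prod isCompact_uIcc)
  exact this.mono_set (Set.prod_mono Set.uIoc_subset_uIcc Set.uIoc_subset_uIcc)

theorem polar_iterated {F : ℂ → ℂ} (hF : ContDiff ℝ (⊤ : ℕ∞) F) (z : ℂ) (R : ℝ) (hR : 0 ≤ R) :
    ∫ r in (0 : ℝ)..R, ∫ t in (-Real.pi)..Real.pi,
      dbarOp F (z + r * ((Real.cos t : ℂ) + (Real.sin t : ℂ) * Complex.I)) /
        ((Real.cos t : ℂ) + (Real.sin t : ℂ) * Complex.I) =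
    (1 / 2) * ∫ t in (-Real.pi)..Real.pi,
      (F (z + R * ((Real.cos t : ℂ) + (Real.sin t : ℂ) * Complex.I)) - F z) := by
  have hc : Continuous (fderiv ℝ F) := hF.continuous_fderiv (by simp)
  have hd : Differentiable ℝ F := hF.differentiable (by simp)
  set E : ℝ → ℂ := fun t => ((Real.cos t : ℂ) + (Real.sin t : ℂ) * Complex.I) with hE
  have hEc : Continuous E := by fun_prop
  have hEd : ∀ t, HasDerivAt E (Complex.I * E t) t := polarE_hasDerivAt
  have key : ∀ r ∈ Set.Ioc 0 R, ∫ t in (-Real.pi)..Real.pi, dbarOp F (z + r * E t) / E t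
      = (1 / 2) * ∫ t in (-Real.pi)..Real.pi, fderiv ℝ F (z + r * E t) (E t) := by
    intro r hr
    have h1 : ∀ t, HasDerivAt (fun t => F (z + r * E t))
        (fderiv ℝ F (z + r * E t) (r * (Complex.I * E t))) t := fun t =>
      (hd (z + r * E t)).hasFDerivAt.comp_hasDerivAt t (((hEd t).const_mul (r : ℂ)).const_add z)
    have h2 : ∫ t in (-Real.pi)..Real.pi, fderiv ℝ F (z + r * E t) (r * (Complex.I * E t)) = 0 := by
      rw [intervalIntegral.integral_eq_sub_of_hasDerivAt (fun t _ => h1 t)]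
      · simp [hE]
      · exact Continuous.intervalIntegrable (by fun_prop) _ _
    have h3 : ∀ t, fderiv ℝ F (z + r * E t) (r * (Complex.I * E t)) =
        r * fderiv ℝ F (z + r * E t) (Complex.I * E t) := by
      intro t
      simpa only [Complex.real_smul] using (fderiv ℝ F (z + r * E t)).map_smul r (Complex.I * E t)
    simp only [h3, intervalIntegral.integral_const_mul] at h2
    have h4 := (mul_eq_zero.1 h2).resolve_left (by exact_mod_cast hr.1.ne')
    simp only [hE, dbarOp_polar]
    rw [intervalIntegral.integral_const_mul, intervalIntegral.integral_add,
      intervalIntegral.integral_const_mul, h4]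
    · simp
    · exact Continuous.intervalIntegrable (by fun_prop) _ _
    · exact Continuous.intervalIntegrable (by fun_prop) _ _
  have step : ∫ r in (0 : ℝ)..R, ∫ t in (-Real.pi)..Real.pi, dbarOp F (z + r * E t) / E t =
      ∫ r in (0 : ℝ)..R, (1 / 2) * ∫ t in (-Real.pi)..Real.pi, fderiv ℝ F (z + r * E t) (E t) := by
    rw [intervalIntegral.integral_of_le hR, intervalIntegral.integral_of_le hR]
    exact setIntegral_congr_fun measurableSet_Ioc key
  rw [step, intervalIntegral.integral_const_mul, intervalIntegral_intervalIntegral_swap]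
  · congr 1
    apply intervalIntegral.integral_congr
    intro t _
    have h1 : ∀ r : ℝ, HasDerivAt (fun r : ℝ => F (z + r * E t)) (fderiv ℝ F (z + r * E t) (E t)) r := by
      intro r
      have h5 : HasDerivAt (fun r : ℝ => z + (r : ℂ) * E t) (E t) r := by
        simpa using (((hasDerivAt_id r).ofReal_comp).mul_const (E t)).const_add z
      exact (hd (z + r * E t)).hasFDerivAt.comp_hasDerivAt r h5
    simp only
    rw [intervalIntegral.integral_eq_sub_of_hasDerivAt (fun t _ => h1 t)]
    · simp [hE]
    · exact Continuous.intervalIntegrable (by fun_prop) _ _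
  · apply integrableOn_rect
    simp only [Function.uncurry_def]
    fun_prop

theorem polar_transform (g : ℂ → ℂ) (hg : Continuous g) (z : ℂ) (R : ℝ) (hR : 0 ≤ R)
    (hgR : ∀ w, R < ‖w‖ → g (z + w) = 0) :
    ∫ μ : ℂ, g μ / (z - μ) = - ∫ r in (0 : ℝ)..R, ∫ t in (-Real.pi)..Real.pi,
      g (z + r * ((Real.cos t : ℂ) + (Real.sin t : ℂ) * Complex.I)) /
        ((Real.cos t : ℂ) + (Real.sin t : ℂ) * Complex.I) := by
  have hE0 : ∀ t : ℝ, ((Real.cos t : ℂ) + (Real.sin t : ℂ) * Complex.I) ≠ 0 := by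
    intro t; rw [← norm_ne_zero_iff, polarE_norm]; exact one_ne_zero
  rw [← integral_add_left_eq_self _ z, ← Complex.integral_comp_polarCoord_symm]
  set E : ℝ → ℂ := fun t => ((Real.cos t : ℂ) + (Real.sin t : ℂ) * Complex.I) with hE
  have hEc : Continuous E := by fun_prop
  have hEn : ∀ t, ‖E t‖ = 1 := polarE_norm
  have hπ : -Real.pi ≤ Real.pi := by linarith [Real.pi_pos]
  have hc : Continuous (Function.uncurry fun r t : ℝ => -(g (z + r * E t) / E t)) := by
    simp only [Function.uncurry_def]
    have h1 : Continuous fun p : ℝ × ℝ => g (z + p.1 * E p.2) := by fun_prop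
    have h2 : Continuous fun p : ℝ × ℝ => E p.2 := hEc.comp continuous_snd
    have h3 : ∀ p : ℝ × ℝ, E p.2 ≠ 0 := fun p => hE0 p.2
    exact (h1.div h2 h3).neg
  have hi := integrableOn_rect hc 0 R (-Real.pi) Real.pi
  rw [Set.uIoc_of_le hR, Set.uIoc_of_le hπ] at hi
  calc _ = ∫ p in Set.Ioi (0 : ℝ) ×ˢ Set.Ioo (-Real.pi) Real.pi,
        -(g (z + p.1 * E p.2) / E p.2) := by
        apply setIntegral_congr_fun (measurableSet_Ioi.prod measurableSet_Ioo)
        rintro ⟨r, t⟩ ⟨hr, ht⟩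
        have hr0 : (r : ℂ) ≠ 0 := by exact_mod_cast (ne_of_gt hr)
        have := hE0 t
        simp only [Complex.polarCoord_symm_apply, Complex.real_smul]
        change _ = -(g (z + r * E t) / E t)
        rw [show z - (z + (r : ℂ) * E t) = -(r * E t) by ring]
        have hEt : E t ≠ 0 := hE0 t
        field_simp
        rfl
    _ = ∫ p in Set.Ioi (0 : ℝ) ×ˢ Set.Ioc (-Real.pi) Real.pi,
        -(g (z + p.1 * E p.2) / E p.2) := by
        apply setIntegral_congr_set
        exact Measure.set_prod_ae_eq (ae_eq_refl _) Ioo_ae_eq_Ioc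
    _ = ∫ p in Set.Ioc (0 : ℝ) R ×ˢ Set.Ioc (-Real.pi) Real.pi,
        -(g (z + p.1 * E p.2) / E p.2) := by
        apply setIntegral_eq_of_subset_of_forall_sdiff_eq_zero
        · exact measurableSet_Ioi.prod measurableSet_Ioc
        · exact Set.prod_mono Set.Ioc_subset_Ioi_self subset_rfl
        · rintro ⟨r, t⟩ ⟨⟨h1, h2⟩, h3⟩
          have h1' : 0 < r := h1
          have : R < r := by
            by_contra h
            exact h3 ⟨⟨h1, not_lt.1 h⟩, h2⟩
          simp only
          rw [hgR]
          · simp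
          · rw [norm_mul, hEn, Complex.norm_real, Real.norm_eq_abs, abs_of_pos h1']; simpa
    _ = ∫ r in Set.Ioc (0 : ℝ) R, ∫ t in Set.Ioc (-Real.pi) Real.pi,
        -(g (z + r * E t) / E t) := setIntegral_prod _ hi
    _ = _ := by
        rw [intervalIntegral.integral_of_le hR]
        simp only [intervalIntegral.integral_of_le hπ, integral_neg]
        rfl

theorem cauchyT_dbar_s14 {F : ℂ → ℂ} (hF : ContDiff ℝ (⊤ : ℕ∞) F)
    (h0 : Filter.Tendsto F (Bornology.cobounded ℂ) (nhds 0))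
    (hs : HasCompactSupport (dbarOp F)) (z : ℂ) : cauchyT (dbarOp F) z = F z := by
  have hgc := (dbarOp_continuous hF).continuous
  obtain ⟨B, hB⟩ := hs.isCompact.isBounded.exists_norm_le
  have hB' : ∀ w, B + ‖z‖ < ‖w‖ → dbarOp F (z + w) = 0 := by
    intro w hw
    apply image_eq_zero_of_notMem_tsupport
    intro h
    have h1 := hB _ h
    have h2 : ‖w‖ ≤ ‖z + w‖ + ‖z‖ := by
      simpa using norm_sub_le (z + w) z
    linarith
  have key : ∀ R : ℝ, 0 ≤ R → B + ‖z‖ ≤ R → (∫ μ : ℂ, dbarOp F μ / (z - μ)) - Real.pi * F z =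
      - ((1 / 2) * ∫ t in (-Real.pi)..Real.pi,
        F (z + R * ((Real.cos t : ℂ) + (Real.sin t : ℂ) * Complex.I))) := by
    intro R hR hBR
    rw [polar_transform _ hgc z R hR (fun w hw => hB' w (by linarith)), polar_iterated hF z R hR,
      intervalIntegral.integral_sub]
    · simp only [intervalIntegral.integral_const, Complex.real_smul]
      push_cast; ring
    · have := hF.continuous
      exact Continuous.intervalIntegrable (by fun_prop) _ _
    · simp
  have main : (∫ μ : ℂ, dbarOp F μ / (z - μ)) - Real.pi * F z = 0 := by
    rw [← norm_le_zero_iff]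
    apply le_of_forall_pos_le_add
    intro ε hε
    have hπ := Real.pi_pos
    have h1 : ∀ᶠ w in Bornology.cobounded ℂ, ‖F w‖ < ε / Real.pi := by
      have := (Metric.tendsto_nhds.1 h0) (ε / Real.pi) (by positivity)
      simpa using this
    rw [← comap_norm_atTop, Filter.eventually_comap, Filter.eventually_atTop] at h1
    obtain ⟨A, hA⟩ := h1
    set R := max 0 (max (B + ‖z‖) (A + ‖z‖)) with hRdef
    have hR0 : 0 ≤ R := le_max_left _ _
    have hRB : B + ‖z‖ ≤ R := (le_max_left _ _).trans (le_max_right _ _)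
    have hRA : A + ‖z‖ ≤ R := (le_max_right _ _).trans (le_max_right _ _)
    rw [key R hR0 hRB, norm_neg, norm_mul]
    have h2 : ‖∫ t in (-Real.pi)..Real.pi,
        F (z + R * ((Real.cos t : ℂ) + (Real.sin t : ℂ) * Complex.I))‖ ≤
        ε / Real.pi * |Real.pi - (-Real.pi)| := by
      apply intervalIntegral.norm_integral_le_of_norm_le_const
      intro t _
      refine (hA _ ?_ _ rfl).le
      have h3 : ‖(R : ℂ) * ((Real.cos t : ℂ) + (Real.sin t : ℂ) * Complex.I)‖ = R := by
        rw [norm_mul, polarE_norm, Complex.norm_real, Real.norm_eq_abs, abs_of_nonneg hR0, mul_one]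
      have h4 := norm_sub_le (z + (R : ℂ) * ((Real.cos t : ℂ) + (Real.sin t : ℂ) * Complex.I)) z
      rw [add_sub_cancel_left, h3] at h4
      linarith
    rw [abs_of_pos (by linarith)] at h2
    have h5 : ε / Real.pi * (Real.pi - (-Real.pi)) = 2 * ε := by field_simp; ring
    rw [h5] at h2
    rw [show ‖(1 / 2 : ℂ)‖ = 1 / 2 by norm_num]
    linarith
  unfold cauchyT
  rw [sub_eq_zero.1 main]
  have : (Real.pi : ℂ) ≠ 0 := by exact_mod_cast Real.pi_ne_zero
  field_simp

theorem dbarOp_eq_zero {F : ℂ → ℂ} {z : ℂ} (h : DifferentiableAt ℂ F z) : dbarOp F z = 0 := by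
  unfold dbarOp
  rw [h.fderiv_restrictScalars ℝ]
  have : fderiv ℂ F z Complex.I = Complex.I * fderiv ℂ F z 1 := by
    rw [← smul_eq_mul, ← map_smul]; simp
  simp only [ContinuousLinearMap.coe_restrictScalars', this]
  linear_combination (1 / 2) * (fderiv ℂ F z 1) * Complex.I_sq

/-- Surjectivity onto germs vanishing at infinity (the `H¹`-surjectivity part of
Theorem 2.5 in concrete form): every function holomorphic off a compact `K ⊆ W` and
vanishing at infinity agrees, outside some compact subset of `W`, with the Cauchy
transform of a smooth function with compact support contained in `W`. -/
theorem cauchyT_surjective_onto_germs (W K : Set ℂ) (hW : IsOpen W)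
    (hWb : Bornology.IsBounded W) (hK : IsCompact K) (hKW : K ⊆ W)
    (f : ℂ → ℂ) (hf : DifferentiableOn ℂ f Kᶜ)
    (hf0 : Filter.Tendsto f (Bornology.cobounded ℂ) (nhds 0)) :
    ∃ g : ℂ → ℂ, ContDiff ℝ (⊤ : ℕ∞) g ∧ IsCompact (tsupport g) ∧ tsupport g ⊆ W ∧
      ∃ K' : Set ℂ, IsCompact K' ∧ K' ⊆ W ∧ ∀ z ∉ K', cauchyT g z = f z := by
  obtain ⟨L, hL, hKL, hLW⟩ := exists_compact_between hK hW hKW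
  obtain ⟨M, hM, hLM, hMW⟩ := exists_compact_between hL hW hLW
  obtain ⟨χ, hχ, -, hχs, hχ1⟩ := exists_contMDiff_support_eq_eq_one_iff (n := (⊤ : ℕ∞))
    (modelWithCornersSelf ℝ ℂ) (isOpen_interior (s := M)) hL.isClosed hLM
  have hχ' : ContDiff ℝ (⊤ : ℕ∞) χ := hχ.contDiff
  set F : ℂ → ℂ := fun w => (1 - (χ w : ℂ)) * f w with hFdef
  have hFf : ∀ w ∉ M, F w = f w := by
    intro w hw
    have : χ w = 0 := by
      by_contra h
      have : w ∈ Function.support χ := h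
      rw [hχs] at this
      exact hw (interior_subset this)
    simp [hFdef, this]
  have hFev : ∀ w ∉ M, F =ᶠ[nhds w] f := fun w hw =>
    Filter.eventually_of_mem (hM.isClosed.isOpen_compl.mem_nhds hw) hFf
  have hfd : ∀ w ∉ K, DifferentiableAt ℂ f w := fun w hw =>
    hf.differentiableAt (hK.isClosed.isOpen_compl.mem_nhds hw)
  have hKM : K ⊆ M := fun x hx => interior_subset (hLM (interior_subset (hKL hx)))
  have hF : ContDiff ℝ (⊤ : ℕ∞) F := by
    rw [contDiff_iff_contDiffAt]
    intro w
    by_cases hw : w ∈ K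
    · have : F =ᶠ[nhds w] fun _ => 0 := by
        filter_upwards [isOpen_interior.mem_nhds (hKL hw)] with v hv
        simp [hFdef, (hχ1 v).1 (interior_subset hv)]
      exact contDiffAt_const.congr_of_eventuallyEq this
    · have h1 : ContDiffAt ℝ (⊤ : ℕ∞) f w :=
        ((hf.analyticAt (hK.isClosed.isOpen_compl.mem_nhds hw)).contDiffAt).restrict_scalars ℝ
      have h2 : ContDiffAt ℝ (⊤ : ℕ∞) (fun w => (χ w : ℂ)) w :=
        (Complex.ofRealCLM.contDiff.comp hχ').contDiffAt
      exact (contDiffAt_const.sub h2).mul h1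
  have hF0 : Filter.Tendsto F (Bornology.cobounded ℂ) (nhds 0) := by
    apply hf0.congr'
    filter_upwards [Bornology.isBounded_def.1 hM.isBounded] with w hw
    exact (hFf w hw).symm
  have hts : tsupport (dbarOp F) ⊆ M := by
    apply closure_minimal _ hM.isClosed
    intro w hw
    by_contra hwM
    exact hw (dbarOp_eq_zero ((hfd w (fun h => hwM (hKM h))).congr_of_eventuallyEq (hFev w hwM)))
  have hcs : IsCompact (tsupport (dbarOp F)) := hM.of_isClosed_subset (isClosed_tsupport _) hts
  refine ⟨dbarOp F, dbarOp_continuous hF, hcs, hts.trans hMW, M, hM, hMW, fun z hz => ?_⟩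
  rw [cauchyT_dbar_s14 hF hF0 hcs z, hFf z hz]
end
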